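/- arXiv:1703.08872 — 3 statements merged into one kernel-verified Lean document; each statement's English description precedes it below -/
import Mathlib

section
/- (Exponential sum bound, tail estimate) Let d ≥ 1, β_j > 0, γ_j > 0, β'_j ≥ 0 for j = 1,…,d, set ρ := max_{1≤j≤d} γ_j/β_j, J := {j : γ_j/β_j = ρ}, d* := |J|, and β'* := Σ_{j∈J} β'_j. Then there exists a constant C > 0, depending only on β, γ, β', and d, such that for all L ≥ 0: Σ_{k ∈ ℕ^d : Σ_j (β_j+γ_j)k_j > L} exp(−Σ_j β_j k_j) ∏_{j=1}^d (k_j+1)^{β'_j} ≤ C exp(−L/(1+ρ)) (L+1)^{d*−1+β'*}. -/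
open scoped ENNReal

/-- The summand `exp (-a k) (k + 1) ^ b` attached to one coordinate. -/
noncomputable def expPolyWeight (a b : ℝ) (k : ℕ) : ℝ :=
  Real.exp (-(a * k)) * ((k : ℝ) + 1) ^ b

/-- The profile `exp (-θ L⁺) (L⁺ + 1) ^ p`. -/
noncomputable def decayProfile (θ p L : ℝ) : ℝ :=
  Real.exp (-(θ * max L 0)) * (max L 0 + 1) ^ p

/-- `g` is bounded by a constant multiple of the profile `exp (-θ L⁺) (L⁺ + 1) ^ p`. -/
def HasDecay (θ p : ℝ) (g : ℝ → ℝ≥0∞) : Prop :=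
  ∃ C : ℝ≥0∞, C ≠ ⊤ ∧ ∀ L, g L ≤ C * ENNReal.ofReal (decayProfile θ p L)

lemma expPolyWeight_nonneg (a b : ℝ) (k : ℕ) : 0 ≤ expPolyWeight a b k := by
  unfold expPolyWeight; positivity

lemma decayProfile_nonneg (θ p L : ℝ) : 0 ≤ decayProfile θ p L := by
  unfold decayProfile; positivity

lemma summable_expPolyWeight {a : ℝ} (ha : 0 < a) (b : ℝ) : Summable (expPolyWeight a b) := by
  have hO : (fun k : ℕ => expPolyWeight a b k) =O[Filter.atTop]
      fun k : ℕ => Real.exp (-(a / 2) * k) := by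
    have h1 := (isLittleO_rpow_exp_pos_mul_atTop b (half_pos ha)).isBigO
    have h2 : Filter.Tendsto (fun k : ℕ => (k : ℝ) + 1) Filter.atTop Filter.atTop :=
      Filter.tendsto_atTop_add_const_right _ _ tendsto_natCast_atTop_atTop
    have h3 := h1.comp_tendsto h2
    have h4 := (Asymptotics.isBigO_refl (fun k : ℕ => Real.exp (-(a * k))) Filter.atTop).mul h3
    refine h4.trans ?_
    refine Asymptotics.IsBigO.of_bound (Real.exp (a / 2)) (Filter.Eventually.of_forall fun k => ?_)
    simp only [Function.comp, Real.norm_eq_abs, Real.abs_exp, ← Real.exp_add]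
    apply Real.exp_le_exp.2
    linarith
  refine summable_of_isBigO_nat ?_ hO
  have := Real.summable_exp_nat_mul_iff.2 (show -(a / 2) < 0 by linarith)
  simpa [mul_comm] using this

lemma tsum_ofReal_expPolyWeight_ne_top {a : ℝ} (ha : 0 < a) (b : ℝ) :
    ∑' k, ENNReal.ofReal (expPolyWeight a b k) ≠ ⊤ := by
  rw [← ENNReal.ofReal_tsum_of_nonneg (expPolyWeight_nonneg a b) (summable_expPolyWeight ha b)]
  exact ENNReal.ofReal_ne_top

lemma max_zero_sub_le (L : ℝ) {x : ℝ} (hx : 0 ≤ x) : max L 0 - x ≤ max (L - x) 0 := by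
  rcases max_cases L 0 with h | h <;> rcases max_cases (L - x) 0 with h' | h' <;> linarith

lemma HasDecay.convolve_of_lt {θ p a s b : ℝ} {g : ℝ → ℝ≥0∞} (hg : HasDecay θ p g)
    (hp : 0 ≤ p) (hθ : 0 ≤ θ) (hs : 0 ≤ s) (has : θ * s < a) :
    HasDecay θ p fun L => ∑' k : ℕ, ENNReal.ofReal (expPolyWeight a b k) * g (L - s * k) := by
  obtain ⟨C, hC, hgC⟩ := hg
  refine ⟨C * ∑' k, ENNReal.ofReal (expPolyWeight (a - θ * s) b k),
    ENNReal.mul_ne_top hC (tsum_ofReal_expPolyWeight_ne_top (by linarith) b), fun L => ?_⟩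
  rw [mul_assoc, ← ENNReal.tsum_mul_right, ← ENNReal.tsum_mul_left]
  refine ENNReal.tsum_le_tsum fun k => ?_
  refine (mul_le_mul_right (hgC _) _).trans ?_
  rw [mul_left_comm]
  refine mul_le_mul_right ?_ _
  rw [← ENNReal.ofReal_mul (expPolyWeight_nonneg _ _ _),
    ← ENNReal.ofReal_mul (expPolyWeight_nonneg _ _ _)]
  apply ENNReal.ofReal_le_ofReal
  have hx : 0 ≤ s * k := by positivity
  have h1 := max_zero_sub_le L hx
  have h2 : max (L - s * k) 0 ≤ max L 0 := max_le_max (by linarith) le_rfl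
  unfold expPolyWeight decayProfile
  calc _ = (Real.exp (-(a * k)) * Real.exp (-(θ * max (L - s * k) 0))) *
        ((k : ℝ) + 1) ^ b * (max (L - s * k) 0 + 1) ^ p := by ring
    _ ≤ (Real.exp (-((a - θ * s) * k)) * Real.exp (-(θ * max L 0))) *
        ((k : ℝ) + 1) ^ b * (max L 0 + 1) ^ p := by
      gcongr ?_ * _ * ?_
      · rw [← Real.exp_add, ← Real.exp_add]
        apply Real.exp_le_exp.2
        nlinarith [mul_le_mul_of_nonneg_left h1 hθ]
      · gcongr
    _ = _ := by ring

lemma natCeil_div_add_one_le {s x : ℝ} (hs : 0 < s) (hx : 0 ≤ x) :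
    (⌈x / s⌉₊ : ℝ) + 1 ≤ (1 / s + 2) * (x + 1) := by
  have := (Nat.ceil_lt_add_one (div_nonneg hx hs.le)).le
  have h : x / s = 1 / s * x := by ring
  have : 0 < 1 / s := by positivity
  nlinarith

lemma tsum_expPolyWeight_tail_le {θ s b : ℝ} (hθ : 0 < θ) (hs : 0 < s) (hb : 0 ≤ b) (L : ℝ) :
    ∑' m : ℕ, ENNReal.ofReal (expPolyWeight (θ * s) b (m + ⌈max L 0 / s⌉₊)) ≤
      ENNReal.ofReal ((1 / s + 2) ^ b) * (∑' m, ENNReal.ofReal (expPolyWeight (θ * s) b m)) *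
        ENNReal.ofReal (decayProfile θ b L) := by
  rw [mul_assoc, ← ENNReal.tsum_mul_right, ← ENNReal.tsum_mul_left]
  refine ENNReal.tsum_le_tsum fun m => ?_
  rw [← ENNReal.ofReal_mul (expPolyWeight_nonneg _ _ _), ← ENNReal.ofReal_mul (by positivity)]
  apply ENNReal.ofReal_le_ofReal
  have hx : 0 ≤ max L 0 := le_max_right _ _
  have h1 := natCeil_div_add_one_le hs hx
  have h2 : max L 0 ≤ s * ⌈max L 0 / s⌉₊ := by
    rw [mul_comm, ← div_le_iff₀ hs]; exact Nat.le_ceil _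
  unfold expPolyWeight decayProfile
  set N := ⌈max L 0 / s⌉₊
  set x := max L 0
  have h3 : ((m + N : ℕ) : ℝ) + 1 ≤ (1 / s + 2) * (m + 1) * (x + 1) := by
    push_cast
    have : (0 : ℝ) ≤ m * N := by positivity
    nlinarith [mul_le_mul_of_nonneg_left h1 (show (0 : ℝ) ≤ m + 1 by positivity)]
  calc _ ≤ (Real.exp (-(θ * s * m)) * Real.exp (-(θ * x))) *
        ((1 / s + 2) * (m + 1) * (x + 1)) ^ b := by
        gcongr
        rw [← Real.exp_add]
        apply Real.exp_le_exp.2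
        push_cast
        nlinarith [mul_le_mul_of_nonneg_left h2 hθ.le]
    _ = _ := by
        rw [Real.mul_rpow (by positivity) (by positivity),
          Real.mul_rpow (by positivity) (by positivity)]
        ring

lemma hasDecay_indicator_tail {θ s b : ℝ} (hθ : 0 < θ) (hs : 0 < s) (hb : 0 ≤ b) :
    HasDecay θ b fun L => ∑' k : ℕ, ENNReal.ofReal (expPolyWeight (θ * s) b k) *
      (if L - s * k < 0 then 1 else 0) := by
  refine ⟨_, ENNReal.mul_ne_top ENNReal.ofReal_ne_top
    (tsum_ofReal_expPolyWeight_ne_top (mul_pos hθ hs) b), fun L =>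
      le_trans ?_ (tsum_expPolyWeight_tail_le hθ hs hb L)⟩
  simp only []
  rw [← Summable.sum_add_tsum_nat_add' (k := ⌈max L 0 / s⌉₊) ENNReal.summable,
    Finset.sum_eq_zero, zero_add]
  · refine ENNReal.tsum_le_tsum fun m => ?_
    split_ifs <;> simp
  · intro k hk
    have h1 : (k : ℝ) < max L 0 / s := Nat.lt_ceil.1 (Finset.mem_range.1 hk)
    rw [lt_div_iff₀ hs] at h1
    have hk0 : (0 : ℝ) ≤ k * s := by positivity
    have : k * s < L := by
      rcases lt_max_iff.1 h1 with h | h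
      · exact h
      · linarith
    rw [if_neg (by linarith), mul_zero]

lemma HasDecay.convolve_of_eq {θ p s b : ℝ} {g : ℝ → ℝ≥0∞} (hg : HasDecay θ p g)
    (hp : 0 ≤ p) (hθ : 0 < θ) (hs : 0 < s) (hb : 0 ≤ b) :
    HasDecay θ (p + (b + 1))
      fun L => ∑' k : ℕ, ENNReal.ofReal (expPolyWeight (θ * s) b k) * g (L - s * k) := by
  obtain ⟨C, hC, hgC⟩ := hg
  refine ⟨C * ENNReal.ofReal ((1 / s + 2) ^ (b + 1)) + C *
    (ENNReal.ofReal ((1 / s + 2) ^ b) * ∑' m, ENNReal.ofReal (expPolyWeight (θ * s) b m)),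
    ?_, fun L => ?_⟩
  · exact ENNReal.add_ne_top.2 ⟨ENNReal.mul_ne_top hC ENNReal.ofReal_ne_top,
      ENNReal.mul_ne_top hC (ENNReal.mul_ne_top ENNReal.ofReal_ne_top
        (tsum_ofReal_expPolyWeight_ne_top (mul_pos hθ hs) b))⟩
  have hx : 0 ≤ max L 0 := le_max_right _ _
  have hN := natCeil_div_add_one_le hs hx
  simp only []
  rw [← Summable.sum_add_tsum_nat_add' (k := ⌈max L 0 / s⌉₊) ENNReal.summable, add_mul]
  refine add_le_add ?_ ?_
  · have hterm : ∀ k ∈ Finset.range ⌈max L 0 / s⌉₊,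
        ENNReal.ofReal (expPolyWeight (θ * s) b k) * g (L - s * k) ≤
        C * ENNReal.ofReal (((1 / s + 2) * (max L 0 + 1)) ^ b * decayProfile θ p L) := by
      intro k hk
      refine (mul_le_mul_right (hgC _) _).trans ?_
      rw [mul_left_comm, ← ENNReal.ofReal_mul (expPolyWeight_nonneg _ _ _)]
      refine mul_le_mul_right (ENNReal.ofReal_le_ofReal ?_) _
      have hk' : (k : ℝ) ≤ ⌈max L 0 / s⌉₊ := by exact_mod_cast (Finset.mem_range.1 hk).le
      have hsk : 0 ≤ s * k := by positivity
      have h1 := max_zero_sub_le L hsk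
      have h2 : max (L - s * k) 0 ≤ max L 0 := max_le_max (by linarith) le_rfl
      unfold expPolyWeight decayProfile
      calc _ = ((k : ℝ) + 1) ^ b * ((Real.exp (-(θ * s * k)) *
            Real.exp (-(θ * max (L - s * k) 0))) * (max (L - s * k) 0 + 1) ^ p) := by ring
        _ ≤ _ := by
          gcongr
          · linarith
          · rw [← Real.exp_add]
            apply Real.exp_le_exp.2
            nlinarith [mul_le_mul_of_nonneg_left h1 hθ.le]
    refine (Finset.sum_le_sum hterm).trans ?_
    rw [Finset.sum_const, Finset.card_range, nsmul_eq_mul, mul_left_comm, mul_assoc C]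
    refine mul_le_mul_right ?_ _
    rw [← ENNReal.ofReal_natCast, ← ENNReal.ofReal_mul (by positivity),
      ← ENNReal.ofReal_mul (by positivity)]
    apply ENNReal.ofReal_le_ofReal
    have hy : 0 < (1 / s + 2) * (max L 0 + 1) := by positivity
    calc _ ≤ ((1 / s + 2) * (max L 0 + 1)) *
          (((1 / s + 2) * (max L 0 + 1)) ^ b * decayProfile θ p L) := by
          have := decayProfile_nonneg θ p L
          gcongr
          linarith
      _ = ((1 / s + 2) * (max L 0 + 1)) ^ (b + 1) * decayProfile θ p L := by
          rw [Real.rpow_add hy, Real.rpow_one]; ring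
      _ = _ := by
          unfold decayProfile
          rw [Real.mul_rpow (by positivity) (by positivity),
            Real.rpow_add (x := max L 0 + 1) (by positivity) p]
          ring
  · rw [mul_assoc C]
    have hg1 : ∀ m : ℕ, g (L - s * ((m + ⌈max L 0 / s⌉₊ : ℕ) : ℝ)) ≤ C := by
      intro m
      refine (hgC _).trans ?_
      have h2 : max L 0 ≤ s * ⌈max L 0 / s⌉₊ := by
        rw [mul_comm, ← div_le_iff₀ hs]; exact Nat.le_ceil _
      have h3 : max (L - s * ((m + ⌈max L 0 / s⌉₊ : ℕ) : ℝ)) 0 = 0 := by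
        apply max_eq_right
        push_cast
        have : 0 ≤ s * m := by positivity
        have := le_max_left L 0
        nlinarith
      rw [decayProfile, h3]
      simp
    calc _ ≤ C * ∑' m : ℕ, ENNReal.ofReal (expPolyWeight (θ * s) b (m + ⌈max L 0 / s⌉₊)) := by
          rw [← ENNReal.tsum_mul_left]
          refine ENNReal.tsum_le_tsum fun m => ?_
          rw [mul_comm C]
          exact mul_le_mul_right (hg1 m) _
      _ ≤ _ := by
          refine mul_le_mul_right ((tsum_expPolyWeight_tail_le hθ hs hb L).trans ?_) _
          refine mul_le_mul_right (ENNReal.ofReal_le_ofReal ?_) _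
          unfold decayProfile
          gcongr
          · linarith
          · linarith

lemma HasDecay.convolve_pi {θ : ℝ} (hθ : 0 < θ) {n : ℕ} (a s b : Fin n → ℝ)
    (hs : ∀ j, 0 < s j) (hb : ∀ j, 0 ≤ b j) (has : ∀ j, θ * s j ≤ a j)
    {p : ℝ} {g : ℝ → ℝ≥0∞} (hp : 0 ≤ p) (hg : HasDecay θ p g) :
    HasDecay θ (p + ∑ j, if θ * s j = a j then b j + 1 else 0) fun L =>
      ∑' k : Fin n → ℕ, (∏ j, ENNReal.ofReal (expPolyWeight (a j) (b j) (k j))) *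
        g (L - ∑ j, s j * (k j : ℝ)) := by
  induction n generalizing p g with
  | zero => simpa [tsum_fintype] using hg
  | succ n ih =>
    have hstep : HasDecay θ (p + if θ * s 0 = a 0 then b 0 + 1 else 0) fun L =>
        ∑' k : ℕ, ENNReal.ofReal (expPolyWeight (a 0) (b 0) k) * g (L - s 0 * k) := by
      split_ifs with h
      · rw [← h]
        exact hg.convolve_of_eq hp hθ (hs 0) (hb 0)
      · rw [add_zero]
        exact hg.convolve_of_lt hp hθ.le (hs 0).le (lt_of_le_of_ne (has 0) h)
    have hp' : 0 ≤ p + if θ * s 0 = a 0 then b 0 + 1 else 0 := by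
      have := hb 0
      split_ifs <;> linarith
    have key := ih (fun j => a j.succ) (fun j => s j.succ) (fun j => b j.succ)
      (fun j => hs _) (fun j => hb _) (fun j => has _) hp' hstep
    rw [Fin.sum_univ_succ, ← add_assoc]
    convert key using 2 with L
    rw [← (Fin.consEquiv fun _ => ℕ).tsum_eq,
      ENNReal.summable.tsum_prod' fun _ => ENNReal.summable, ENNReal.tsum_comm]
    refine tsum_congr fun k => ?_
    rw [← ENNReal.tsum_mul_left]
    refine tsum_congr fun m => ?_
    simp only [Fin.consEquiv_apply, Fin.prod_univ_succ, Fin.sum_univ_succ, Fin.cons_zero,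
      Fin.cons_succ]
    rw [show L - (s 0 * (m : ℝ) + ∑ j : Fin n, s j.succ * (k j : ℝ)) =
      L - ∑ j : Fin n, s j.succ * (k j : ℝ) - s 0 * m by ring]
    ring

lemma hasDecay_pi_tail {θ : ℝ} (hθ : 0 < θ) {d : ℕ} (a s b : Fin d → ℝ)
    (hs : ∀ j, 0 < s j) (hb : ∀ j, 0 ≤ b j) (has : ∀ j, θ * s j ≤ a j)
    (hex : ∃ j, θ * s j = a j) :
    HasDecay θ ((∑ j, if θ * s j = a j then b j + 1 else 0) - 1) fun L =>
      ∑' k : Fin d → ℕ, (∏ j, ENNReal.ofReal (expPolyWeight (a j) (b j) (k j))) *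
        (if L - ∑ j, s j * (k j : ℝ) < 0 then 1 else 0) := by
  obtain ⟨i, hi⟩ := hex
  obtain _ | n := d
  · exact i.elim0
  have key := (hasDecay_indicator_tail hθ (hs i) (hb i)).convolve_pi hθ
    (fun j => a (i.succAbove j)) (fun j => s (i.succAbove j)) (fun j => b (i.succAbove j))
    (fun j => hs _) (fun j => hb _) (fun j => has _) (hb i)
  rw [Fin.sum_univ_succAbove _ i, if_pos hi, add_sub_right_comm, add_sub_cancel_right]
  convert key using 2 with L
  rw [← (Fin.insertNthEquiv (fun _ => ℕ) i).tsum_eq,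
      ENNReal.summable.tsum_prod' fun _ => ENNReal.summable, ENNReal.tsum_comm]
  refine tsum_congr fun k => ?_
  rw [← ENNReal.tsum_mul_left]
  refine tsum_congr fun m => ?_
  simp only [Fin.insertNthEquiv_apply, Fin.prod_univ_succAbove _ i, Fin.sum_univ_succAbove _ i,
    Fin.insertNth_apply_same, Fin.insertNth_apply_succAbove, hi]
  rw [show L - (s i * (m : ℝ) + ∑ j : Fin n, s (i.succAbove j) * (k j : ℝ)) =
    L - ∑ j : Fin n, s (i.succAbove j) * (k j : ℝ) - s i * m by ring]
  ring

lemma tsum_le_of_tsum_ofReal_le {ι : Type*} {f : ι → ℝ} (hf : ∀ i, 0 ≤ f i) {B : ℝ} (hB : 0 ≤ B)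
    (h : ∑' i, ENNReal.ofReal (f i) ≤ ENNReal.ofReal B) : ∑' i, f i ≤ B := by
  by_cases hs : Summable f
  · rwa [← ENNReal.ofReal_tsum_of_nonneg hf hs, ENNReal.ofReal_le_ofReal_iff hB] at h
  · rwa [tsum_eq_zero_of_not_summable hs]

/-- exponential sum bound, tail estimate: with
`ρ = max_j γ_j/β_j`, `J = {j : γ_j/β_j = ρ}`, `d* = |J|`, `β'* = ∑_{j∈J} β'_j`,
there is `C = C(β,γ,β',d) > 0` such that for every `L ≥ 0`
`∑_{(β+γ)·k > L} exp(-β·k) ∏_j (k_j+1)^{β'_j} ≤ C exp(-L/(1+ρ)) (L+1)^{d*-1+β'*}`. -/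
theorem exponential_sum_tail_bound
    {d : ℕ} (hd : 1 ≤ d) (β γ β' : Fin d → ℝ)
    (hβ : ∀ j, 0 < β j) (hγ : ∀ j, 0 < γ j) (hβ' : ∀ j, 0 ≤ β' j)
    (ρ : ℝ) (hρmem : ∃ j, γ j / β j = ρ) (hρub : ∀ j, γ j / β j ≤ ρ) :
    ∃ C > (0 : ℝ), ∀ L : ℝ, 0 ≤ L →
      (∑' k : Fin d → ℕ,
        if L < ∑ j, (β j + γ j) * (k j : ℝ)
        then Real.exp (-∑ j, β j * (k j : ℝ)) * ∏ j, ((k j : ℝ) + 1) ^ (β' j)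
        else 0) ≤
      C * Real.exp (-L / (1 + ρ)) *
        (L + 1) ^
          (((Finset.univ.filter fun j => γ j / β j = ρ).card : ℝ) - 1 +
            ∑ j ∈ Finset.univ.filter fun j => γ j / β j = ρ, β' j) := by
  have hρ : 0 < ρ := by
    obtain ⟨j, hj⟩ := hρmem
    rw [← hj]
    exact div_pos (hγ j) (hβ j)
  have hθ : 0 < 1 / (1 + ρ) := by positivity
  have heq : ∀ j, 1 / (1 + ρ) * (β j + γ j) = β j ↔ γ j / β j = ρ := by
    intro j
    have := hβ j
    field_simp
    constructor <;> intro h <;> linarith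
  have hle : ∀ j, 1 / (1 + ρ) * (β j + γ j) ≤ β j := by
    intro j
    have h := hρub j
    rw [div_le_iff₀ (hβ j)] at h
    rw [one_div, inv_mul_le_iff₀ (by positivity)]
    linarith
  obtain ⟨C, hC, hbound⟩ := hasDecay_pi_tail hθ β (fun j => β j + γ j) β'
    (fun j => add_pos (hβ j) (hγ j)) hβ' hle (hρmem.imp fun j => (heq j).2)
  refine ⟨C.toReal + 1, by positivity, fun L hL => ?_⟩
  have hexp : ((∑ j, if 1 / (1 + ρ) * (β j + γ j) = β j then β' j + 1 else 0) - 1) =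
      (((Finset.univ.filter fun j => γ j / β j = ρ).card : ℝ) - 1 +
        ∑ j ∈ Finset.univ.filter fun j => γ j / β j = ρ, β' j) := by
    simp only [heq]
    rw [← Finset.sum_filter, Finset.sum_add_distrib, Finset.sum_const, nsmul_eq_mul, mul_one]
    ring
  rw [← hexp]
  refine tsum_le_of_tsum_ofReal_le (fun k => ?_) (by positivity) ?_
  · split_ifs <;> positivity
  have hprofile := decayProfile_nonneg (1 / (1 + ρ))
    ((∑ j, if 1 / (1 + ρ) * (β j + γ j) = β j then β' j + 1 else 0) - 1) L
  calc _ = _ := tsum_congr fun k => ?_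
    _ ≤ _ := hbound L
    _ ≤ _ := ?_
  · rw [← ENNReal.ofReal_prod_of_nonneg fun j _ => expPolyWeight_nonneg _ _ _]
    simp only [sub_neg]
    split_ifs
    · simp only [expPolyWeight, Finset.prod_mul_distrib, ← Real.exp_sum, Finset.sum_neg_distrib,
        mul_one]
    · simp
  · rw [← ENNReal.ofReal_toReal hC, ← ENNReal.ofReal_mul ENNReal.toReal_nonneg]
    apply ENNReal.ofReal_le_ofReal
    rw [ENNReal.toReal_ofReal ENNReal.toReal_nonneg, mul_assoc]
    refine mul_le_mul (by linarith) (le_of_eq ?_) hprofile (by positivity)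
    rw [decayProfile, max_eq_left hL]
    congr 2
    ring
end

section
/- (Error bound for Smolyak's algorithm with simplex-type sets) Let Y be a Banach space and M : ℕ^d → Y satisfy ‖(Δ_mix M)(k)‖_Y ≤ ∏_{j=1}^d K_{j,1} exp(−β_j k_j)(k_j+1)^{β'_j} for all k ∈ ℕ^d, with K_{j,1} > 0, β_j > 0, β'_j ≥ 0. Let γ_j > 0, set ρ := max_j γ_j/β_j, J := {j : γ_j/β_j = ρ}, d* := |J|, β'* := Σ_{j∈J} β'_j, K₁ := ∏_j K_{j,1}, and for L > 0 let I_L := {k ∈ ℕ^d : Σ_j (β_j+γ_j)k_j ≤ L}. Let M_∞ := Σ_{k∈ℕ^d} (Δ_mix M)(k) (this sum converges absolutely). Then there is a constant C > 0, depending only on β, γ, β', and d, such that for all L > 0: ‖S_{I_L}(M) − M_∞‖_Y ≤ K₁ C exp(−L/(1+ρ)) (L+1)^{d*−1+β'*}. -/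
open scoped Classical

/-- The `j`-th unidirectional difference operator:
`(Δ_j M)(k) = M(k) - M(k - e_j)` if `k j > 0`, and `(Δ_j M)(k) = M(k)` if `k j = 0`. -/
def diffOp {d : ℕ} {Y : Type*} [AddCommGroup Y] (j : Fin d) (M : (Fin d → ℕ) → Y) :
    (Fin d → ℕ) → Y :=
  fun k => if k j = 0 then M k else M k - M (Function.update k j (k j - 1))

/-- The mixed difference operator `Δ_mix = Δ_1 ∘ ⋯ ∘ Δ_d`. -/
def mixDiff {d : ℕ} {Y : Type*} [AddCommGroup Y] (M : (Fin d → ℕ) → Y) :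
    (Fin d → ℕ) → Y :=
  (List.finRange d).foldr (fun j F => diffOp j F) M

theorem summable_exp_neg_mul_add_two_rpow {c : ℝ} (hc : 0 < c) (p : ℝ) :
    Summable fun m : ℕ => Real.exp (-c * m) * ((m : ℝ) + 2) ^ p := by
  have h := ((summable_nat_add_iff 2).2
    (Real.summable_pow_mul_exp_neg_nat_mul ⌈p⌉₊ hc)).mul_left (Real.exp (2 * c))
  refine Summable.of_nonneg_of_le (fun m => by positivity) (fun m => ?_) h
  have h1 : ((m : ℝ) + 2) ^ p ≤ ((m : ℝ) + 2) ^ ⌈p⌉₊ := by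
    rw [← Real.rpow_natCast]
    exact Real.rpow_le_rpow_of_exponent_le (by linarith [m.cast_nonneg (α := ℝ)]) (Nat.le_ceil p)
  have h2 : Real.exp (-c * m) = Real.exp (2 * c) * Real.exp (-c * ((m + 2 : ℕ) : ℝ)) := by
    rw [← Real.exp_add]
    congr 1
    push_cast
    ring
  rw [h2]
  push_cast
  calc _ ≤ Real.exp (2 * c) * Real.exp (-c * ((m : ℝ) + 2)) * ((m : ℝ) + 2) ^ ⌈p⌉₊ := by gcongr
    _ = _ := by ring

/-- Beyond a threshold `t ≥ 0`, an exponentially damped power sums to `O((t + 1) ^ p)`. -/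
theorem exists_sum_exp_tail_le {c p : ℝ} (hc : 0 < c) (hp : 0 ≤ p) :
    ∃ C > (0 : ℝ), ∀ t : ℝ, 0 ≤ t → ∀ N : ℕ,
      (∑ n ∈ Finset.range N,
        if t ≤ (n : ℝ) then Real.exp (-c * (n - t)) * ((n : ℝ) + 1) ^ p else 0)
        ≤ C * (t + 1) ^ p := by
  have hs := summable_exp_neg_mul_add_two_rpow hc p
  refine ⟨∑' m : ℕ, Real.exp (-c * m) * ((m : ℝ) + 2) ^ p,
    hs.tsum_pos (fun m => by positivity) 0 (by positivity), fun t ht N => ?_⟩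
  rw [← Finset.sum_filter]
  have hinj : Set.InjOn (fun n : ℕ => n - ⌈t⌉₊)
      ((Finset.range N).filter fun n : ℕ => t ≤ (n : ℝ)) := by
    intro x hx y hy hxy
    simp only [Finset.coe_filter, Set.mem_ofPred_eq] at hx hy hxy
    have := Nat.ceil_le.2 hx.2
    have := Nat.ceil_le.2 hy.2
    omega
  calc _ ≤ ∑ n ∈ (Finset.range N).filter (fun n : ℕ => t ≤ (n : ℝ)),
        (Real.exp (-c * ((n - ⌈t⌉₊ : ℕ) : ℝ)) * (((n - ⌈t⌉₊ : ℕ) : ℝ) + 2) ^ p)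
          * (t + 1) ^ p := by
        refine Finset.sum_le_sum fun n hn => ?_
        have hn' := Nat.ceil_le.2 (Finset.mem_filter.1 hn).2
        obtain ⟨m, rfl⟩ := Nat.exists_eq_add_of_le hn'
        have h1 := Nat.le_ceil t
        have h2 := (Nat.ceil_lt_add_one ht).le
        have hm : (0 : ℝ) ≤ m := m.cast_nonneg
        rw [Nat.add_sub_cancel_left, mul_assoc, ← Real.mul_rpow (by positivity) (by positivity)]
        push_cast
        gcongr ?_ * ?_
        · apply Real.exp_le_exp.2
          nlinarith
        · refine Real.rpow_le_rpow (by positivity) ?_ hp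
          nlinarith
    _ = (∑ m ∈ ((Finset.range N).filter (fun n : ℕ => t ≤ (n : ℝ))).image (fun n => n - ⌈t⌉₊),
        Real.exp (-c * m) * ((m : ℝ) + 2) ^ p) * (t + 1) ^ p := by
        rw [Finset.sum_image hinj, Finset.sum_mul]
    _ ≤ _ := by
        gcongr
        exact hs.sum_le_tsum _ fun m _ => by positivity

/-- A power that is exponentially damped only beyond `t ≥ 0` sums to `O((t + 1) ^ (p + 1))`. -/
theorem exists_sum_exp_max_le {c p : ℝ} (hc : 0 < c) (hp : 0 ≤ p) :
    ∃ C > (0 : ℝ), ∀ t : ℝ, 0 ≤ t → ∀ N : ℕ,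
      (∑ n ∈ Finset.range N, Real.exp (-c * max ((n : ℝ) - t) 0) * ((n : ℝ) + 1) ^ p)
        ≤ C * (t + 1) ^ (p + 1) := by
  obtain ⟨C, hC, h⟩ := exists_sum_exp_tail_le hc hp
  refine ⟨C + 1, by positivity, fun t ht N => ?_⟩
  have hterm : ∀ n ∈ Finset.range N,
      Real.exp (-c * max ((n : ℝ) - t) 0) * ((n : ℝ) + 1) ^ p ≤
        (if t ≤ (n : ℝ) then Real.exp (-c * (n - t)) * ((n : ℝ) + 1) ^ p else 0)
          + if (n : ℝ) < t then (t + 1) ^ p else 0 := by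
    intro n _
    by_cases hn : t ≤ (n : ℝ)
    · rw [if_pos hn, if_neg (not_lt.2 hn), max_eq_left (by linarith), add_zero]
    · have hn' := not_le.1 hn
      rw [if_neg hn, if_pos hn', max_eq_right (by linarith), mul_zero, Real.exp_zero, one_mul,
        zero_add]
      gcongr
  have hcount : (∑ n ∈ Finset.range N, if (n : ℝ) < t then (t + 1) ^ p else 0)
      ≤ (t + 1) * (t + 1) ^ p := by
    rw [← Finset.sum_filter, Finset.sum_const, nsmul_eq_mul]
    gcongr
    have hsub : (Finset.range N).filter (fun n : ℕ => (n : ℝ) < t) ⊆ Finset.range ⌈t⌉₊ := by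
      intro n hn
      exact Finset.mem_range.2 (Nat.lt_ceil.2 (Finset.mem_filter.1 hn).2)
    have hcard := Finset.card_le_card hsub
    rw [Finset.card_range] at hcard
    exact (Nat.cast_le.2 hcard).trans (Nat.ceil_lt_add_one ht).le
  have hpow : (t + 1) * (t + 1) ^ p = (t + 1) ^ (p + 1) := by
    rw [Real.rpow_add_one (by positivity), mul_comm]
  have hle : (t + 1) ^ p ≤ (t + 1) ^ (p + 1) :=
    Real.rpow_le_rpow_of_exponent_le (by linarith) (by linarith)
  calc _ ≤ _ := Finset.sum_le_sum hterm
    _ ≤ C * (t + 1) ^ p + (t + 1) * (t + 1) ^ p := by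
        rw [Finset.sum_add_distrib]
        exact add_le_add (h t ht N) hcount
    _ ≤ (C + 1) * (t + 1) ^ (p + 1) := by
        rw [hpow]
        nlinarith

theorem sum_piFinset_const_eq_sum_splitAt {ι R : Type*} [Fintype ι] [DecidableEq ι]
    [AddCommMonoid R] (i : ι) (S : Finset ℕ) (F : (ι → ℕ) → R) :
    ∑ k ∈ Fintype.piFinset (fun _ : ι => S), F k =
      ∑ k' ∈ Fintype.piFinset (fun _ : {j // j ≠ i} => S), ∑ n ∈ S,
        F ((Equiv.piSplitAt i fun _ => ℕ).symm (n, k')) := by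
  rw [Finset.sum_comm, ← Finset.sum_product']
  refine Finset.sum_equiv (Equiv.piSplitAt i fun _ => ℕ) (fun k => ?_) fun k _ => ?_
  · simp only [Fintype.mem_piFinset, Finset.mem_product, Equiv.piSplitAt_apply]
    refine ⟨fun h => ⟨h i, fun j => h j⟩, fun h j => ?_⟩
    by_cases hj : j = i
    · exact hj ▸ h.1
    · exact h.2 ⟨j, hj⟩
  · exact congrArg F (Equiv.symm_apply_apply _ k).symm

theorem sum_piFinset_prod_le {ι κ : Type*} [Fintype ι] [DecidableEq ι] (S : Finset κ)
    {f : ι → κ → ℝ} {c : ι → ℝ} (hf : ∀ j n, 0 ≤ f j n) (h : ∀ j, ∑ n ∈ S, f j n ≤ c j) :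
    ∑ k ∈ Fintype.piFinset (fun _ : ι => S), ∏ j, f j (k j) ≤ ∏ j, c j := by
  rw [← Finset.prod_univ_sum]
  exact Finset.prod_le_prod (fun j _ => Finset.sum_nonneg fun n _ => hf j n) fun j _ => h j

theorem add_one_le_const_mul_add_one {b L t : ℝ} (hb : 0 < b) (hL : 0 ≤ L) (ht : t ≤ L / b) :
    t + 1 ≤ (1 + 1 / b) * (L + 1) := by
  have h : (1 + 1 / b) * (L + 1) = L / b + 1 + (L + 1 / b) := by ring
  have : 0 ≤ 1 / b := by positivity
  linarith

/-- One-dimensional factor: it contributes a power of `L + 1` only without extra damping `δ`. -/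
theorem exists_sum_factor_le {ε b δ p : ℝ} (hε : 0 < ε) (hb : 0 < b) (hδ : 0 ≤ δ) (hp : 0 ≤ p) :
    ∃ C > (0 : ℝ), ∀ L : ℝ, 0 ≤ L → ∀ N : ℕ,
      (∑ n ∈ Finset.range N, Real.exp (-δ * n) * Real.exp (-ε * max (b * n - L) 0)
        * ((n : ℝ) + 1) ^ p) ≤ C * (L + 1) ^ (if δ = 0 then p + 1 else 0) := by
  by_cases h0 : δ = 0
  · obtain ⟨C, hC, h⟩ := exists_sum_exp_max_le (mul_pos hε hb) hp
    refine ⟨C * (1 + 1 / b) ^ (p + 1), by positivity, fun L hL N => ?_⟩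
    rw [if_pos h0, h0]
    have hLb : 0 ≤ L / b := by positivity
    calc _ = ∑ n ∈ Finset.range N,
          Real.exp (-(ε * b) * max ((n : ℝ) - L / b) 0) * ((n : ℝ) + 1) ^ p := by
          refine Finset.sum_congr rfl fun n _ => ?_
          have : max (b * n - L) 0 = b * max ((n : ℝ) - L / b) 0 := by
            rw [mul_max_of_nonneg _ _ hb.le, mul_zero]
            congr 1
            field_simp
          rw [this]
          simp [mul_assoc]
      _ ≤ C * (L / b + 1) ^ (p + 1) := h _ hLb N
      _ ≤ C * ((1 + 1 / b) * (L + 1)) ^ (p + 1) := by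
          gcongr
          exact add_one_le_const_mul_add_one hb hL le_rfl
      _ = _ := by rw [Real.mul_rpow (by positivity) (by positivity), mul_assoc]
  · obtain ⟨C, hC, h⟩ := exists_sum_exp_tail_le (lt_of_le_of_ne hδ (Ne.symm h0)) hp
    refine ⟨C, hC, fun L hL N => ?_⟩
    rw [if_neg h0, Real.rpow_zero]
    refine le_trans (Finset.sum_le_sum fun n _ => ?_)
      ((h 0 le_rfl N).trans_eq (by simp))
    rw [if_pos n.cast_nonneg, sub_zero]
    gcongr
    refine mul_le_of_le_one_right (Real.exp_nonneg _) (Real.exp_le_one_iff.2 ?_)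
    have := mul_nonneg hε.le (le_max_right (b * n - L) 0)
    linarith

/-- Sum along one undamped direction over the part of a fibre with `L < b * n + s`. -/
theorem exists_sum_fibre_le {a b p : ℝ} (ha : 0 < a) (hb : 0 < b) (hp : 0 ≤ p) :
    ∃ C > (0 : ℝ), ∀ L : ℝ, 0 ≤ L → ∀ s : ℝ, 0 ≤ s → ∀ N : ℕ,
      (∑ n ∈ Finset.range N,
        if L < b * n + s then Real.exp (-a * (b * n + s)) * ((n : ℝ) + 1) ^ p else 0)
        ≤ C * (L + 1) ^ p * (Real.exp (-a * L) * Real.exp (-a * max (s - L) 0)) := by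
  obtain ⟨C, hC, h⟩ := exists_sum_exp_tail_le (mul_pos ha hb) hp
  refine ⟨C * (1 + 1 / b) ^ p, by positivity, fun L hL s hs N => ?_⟩
  set t : ℝ := max ((L - s) / b) 0 with ht
  have ht0 : 0 ≤ t := le_max_right _ _
  have hbt : b * t = L - s + max (s - L) 0 := by
    rw [ht, mul_max_of_nonneg _ _ hb.le, mul_zero, mul_div_cancel₀ _ hb.ne', ← max_add_add_left,
      add_zero, max_comm]
    congr 1
    ring
  have htL : t ≤ L / b := max_le (by gcongr; linarith) (by positivity)
  calc _ ≤ ∑ n ∈ Finset.range N, (if t ≤ (n : ℝ) then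
          Real.exp (-(a * b) * (n - t)) * ((n : ℝ) + 1) ^ p else 0)
          * (Real.exp (-a * L) * Real.exp (-a * max (s - L) 0)) := by
        refine Finset.sum_le_sum fun n _ => ?_
        by_cases hn : L < b * n + s
        · have htn : t ≤ (n : ℝ) :=
            max_le ((div_le_iff₀ hb).2 (by linarith)) n.cast_nonneg
          rw [if_pos hn, if_pos htn, mul_right_comm, ← Real.exp_add, ← Real.exp_add]
          refine le_of_eq ?_
          congr 2
          linear_combination (-a) * hbt
        · rw [if_neg hn]
          split_ifs <;> positivity
    _ ≤ C * (t + 1) ^ p * (Real.exp (-a * L) * Real.exp (-a * max (s - L) 0)) := by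
        rw [← Finset.sum_mul]
        gcongr
        exact h t ht0 N
    _ ≤ C * ((1 + 1 / b) * (L + 1)) ^ p
          * (Real.exp (-a * L) * Real.exp (-a * max (s - L) 0)) := by
        gcongr
        exact add_one_le_const_mul_add_one hb hL htL
    _ = _ := by
        rw [Real.mul_rpow (by positivity) (by positivity)]
        ring

theorem exp_neg_max_sum_sub_le_prod {ι : Type*} [Fintype ι] {a L : ℝ} (ha : 0 ≤ a) {x : ι → ℝ}
    (hx : ∀ j, 0 ≤ x j) :
    Real.exp (-a * max ((∑ j, x j) - L) 0) ≤
      ∏ j, Real.exp (-(a / (Fintype.card ι + 1)) * max (x j - L) 0) := by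
  rw [← Real.exp_sum, ← Finset.mul_sum]
  apply Real.exp_le_exp.2
  have h : ∑ j, max (x j - L) 0 ≤ (Fintype.card ι + 1 : ℝ) * max ((∑ j, x j) - L) 0 := by
    calc _ ≤ ∑ _j : ι, max ((∑ j, x j) - L) 0 := by
          refine Finset.sum_le_sum fun j _ => ?_
          gcongr
          exact Finset.single_le_sum (fun i _ => hx i) (Finset.mem_univ j)
      _ = Fintype.card ι * max ((∑ j, x j) - L) 0 := by simp
      _ ≤ _ := by
          gcongr
          linarith
  have h2 : a / (Fintype.card ι + 1 : ℝ) * ∑ j, max (x j - L) 0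
      ≤ a * max ((∑ j, x j) - L) 0 := by
    calc _ ≤ a / (Fintype.card ι + 1 : ℝ) *
          ((Fintype.card ι + 1 : ℝ) * max ((∑ j, x j) - L) 0) := by gcongr
      _ = _ := by field_simp
  linarith

/-- Uniform bound for the sum of `∏ exp (-β j k j) (k j + 1) ^ p j` over the part of a box outside
the simplex `∑ b j k j ≤ L`. -/
theorem exists_sum_compl_simplex_le {ι : Type*} [Fintype ι] [DecidableEq ι] {a : ℝ}
    {b δ p : ι → ℝ} (ha : 0 < a) (hb : ∀ j, 0 < b j) (hδ : ∀ j, 0 ≤ δ j) (hp : ∀ j, 0 ≤ p j)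
    (i : ι) (hi : δ i = 0) :
    ∃ C > (0 : ℝ), ∀ L : ℝ, 0 ≤ L → ∀ N : ℕ,
      (∑ k ∈ Fintype.piFinset (fun _ : ι => Finset.range N),
        if L < ∑ j, b j * (k j : ℝ) then
          ∏ j, Real.exp (-(a * b j + δ j) * k j) * ((k j : ℝ) + 1) ^ p j else 0) ≤
      C * Real.exp (-a * L) *
        (L + 1) ^ (p i + ∑ j : {j // j ≠ i}, if δ j = 0 then p j + 1 else 0) := by
  obtain ⟨C₀, hC₀, h₀⟩ := exists_sum_fibre_le ha (hb i) (hp i)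
  set ε : ℝ := a / (Fintype.card {j // j ≠ i} + 1) with hε
  have hεpos : 0 < ε := by positivity
  choose D hD hfac using fun j : {j // j ≠ i} =>
    exists_sum_factor_le hεpos (hb j) (hδ j) (hp j)
  refine ⟨C₀ * ∏ j, D j, mul_pos hC₀ (Finset.prod_pos fun j _ => hD j), fun L hL N => ?_⟩
  have hL1 : 0 < L + 1 := by linarith
  rw [sum_piFinset_const_eq_sum_splitAt i]
  calc _ ≤ ∑ k ∈ Fintype.piFinset (fun _ : {j // j ≠ i} => Finset.range N),
        C₀ * (L + 1) ^ p i * Real.exp (-a * L) *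
          ∏ j : {j // j ≠ i}, Real.exp (-δ j * k j) * Real.exp (-ε * max (b j * k j - L) 0)
            * ((k j : ℝ) + 1) ^ p j := by
        refine Finset.sum_le_sum fun k _ => ?_
        set s : ℝ := ∑ j : {j // j ≠ i}, b j * (k j : ℝ) with hs
        have hx : ∀ j : {j // j ≠ i}, 0 ≤ b j * (k j : ℝ) := fun j =>
          mul_nonneg (hb j).le (Nat.cast_nonneg _)
        have hs0 : 0 ≤ s := Finset.sum_nonneg fun j _ => hx j
        set P : ℝ := ∏ j : {j // j ≠ i}, Real.exp (-δ j * k j) * ((k j : ℝ) + 1) ^ p j with hP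
        have hP0 : 0 ≤ P := Finset.prod_nonneg fun j _ => by positivity
        have hsplit : ∀ n : ℕ,
            (if L < ∑ j, b j * (((Equiv.piSplitAt i fun _ => ℕ).symm (n, k) j : ℕ) : ℝ) then
              ∏ j, Real.exp (-(a * b j + δ j) *
                  (((Equiv.piSplitAt i fun _ => ℕ).symm (n, k) j : ℕ) : ℝ)) *
                ((((Equiv.piSplitAt i fun _ => ℕ).symm (n, k) j : ℕ) : ℝ) + 1) ^ p j else 0) =
            (if L < b i * n + s then
              Real.exp (-a * (b i * n + s)) * ((n : ℝ) + 1) ^ p i else 0) * P := by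
          intro n
          have hki : (Equiv.piSplitAt i fun _ => ℕ).symm (n, k) i = n := by simp
          have hkj : ∀ j : {j // j ≠ i},
              (Equiv.piSplitAt i fun _ => ℕ).symm (n, k) j = k j := by
            rintro ⟨j, hj⟩
            simp [hj]
          rw [Fintype.sum_eq_add_sum_subtype_ne _ i, Fintype.prod_eq_mul_prod_subtype_ne _ i]
          simp only [hki, hkj, hi, add_zero]
          rw [← hs, ite_mul, zero_mul]
          congr 1
          have hprod : ∏ j : {j // j ≠ i}, Real.exp (-(a * b j + δ j) * k j)
              * ((k j : ℝ) + 1) ^ p j = Real.exp (-a * s) * P := by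
            rw [hs, hP, Finset.mul_sum, Real.exp_sum, ← Finset.prod_mul_distrib]
            refine Finset.prod_congr rfl fun j _ => ?_
            rw [← mul_assoc, ← Real.exp_add]
            congr 2
            ring
          rw [hprod, mul_add, Real.exp_add]
          ring_nf
        simp only [hsplit]
        rw [← Finset.sum_mul]
        calc _ ≤ C₀ * (L + 1) ^ p i * (Real.exp (-a * L) * Real.exp (-a * max (s - L) 0)) * P := by
              gcongr
              exact h₀ L hL s hs0 N
          _ ≤ C₀ * (L + 1) ^ p i * (Real.exp (-a * L) *
                ∏ j : {j // j ≠ i}, Real.exp (-ε * max (b j * k j - L) 0)) * P := by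
              gcongr
              exact exp_neg_max_sum_sub_le_prod ha.le hx
          _ = _ := by
              have hprod : ∏ j : {j // j ≠ i}, Real.exp (-δ j * k j)
                  * Real.exp (-ε * max (b j * k j - L) 0) * ((k j : ℝ) + 1) ^ p j =
                  (∏ j : {j // j ≠ i}, Real.exp (-ε * max (b j * k j - L) 0)) * P := by
                rw [hP, ← Finset.prod_mul_distrib]
                exact Finset.prod_congr rfl fun j _ => by ring
              rw [hprod]
              ring
    _ ≤ C₀ * (L + 1) ^ p i * Real.exp (-a * L) *
          ∏ j : {j // j ≠ i}, D j * (L + 1) ^ (if δ j = 0 then p j + 1 else 0) := by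
        rw [← Finset.mul_sum]
        gcongr
        exact sum_piFinset_prod_le (Finset.range N)
          (f := fun (j : {j // j ≠ i}) (n : ℕ) => Real.exp (-δ j * n) *
            Real.exp (-ε * max (b j * n - L) 0) * ((n : ℝ) + 1) ^ p j)
          (fun j n => by positivity) fun j => hfac j L hL N
    _ = _ := by
        rw [Finset.prod_mul_distrib, ← Real.rpow_sum_of_pos hL1, Real.rpow_add hL1]
        ring

/-- error bound for Smolyak's algorithm with simplex-type sets:
if `‖(Δ_mix M)(k)‖ ≤ ∏_j K_{j,1} exp(-β_j k_j)(k_j+1)^{β'_j}` and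
`I_L = {k : ∑_j (β_j+γ_j)k_j ≤ L}`, then with `ρ = max_j γ_j/β_j`,
`J = {j : γ_j/β_j = ρ}`, `d* = |J|`, `β'* = ∑_{j∈J} β'_j`, `K₁ = ∏_j K_{j,1}`,
there is `C = C(β,γ,β',d) > 0` with
`‖S_{I_L}(M) - M_∞‖ ≤ K₁ C exp(-L/(1+ρ)) (L+1)^{d*-1+β'*}` for all `L > 0`. -/
theorem smolyak_simplex_error_bound
    {d : ℕ} (hd : 1 ≤ d) {Y : Type*} [NormedAddCommGroup Y] [NormedSpace ℝ Y]
    [CompleteSpace Y]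
    (β β' γ : Fin d → ℝ)
    (hβ : ∀ j, 0 < β j) (hβ' : ∀ j, 0 ≤ β' j) (hγ : ∀ j, 0 < γ j)
    (ρ : ℝ) (hρmem : ∃ j, γ j / β j = ρ) (hρub : ∀ j, γ j / β j ≤ ρ) :
    ∃ C > (0 : ℝ), ∀ K1 : Fin d → ℝ, (∀ j, 0 < K1 j) →
      ∀ M : (Fin d → ℕ) → Y,
      (∀ k : Fin d → ℕ, ‖mixDiff M k‖ ≤
        ∏ j, K1 j * Real.exp (-β j * (k j : ℝ)) * ((k j : ℝ) + 1) ^ (β' j)) →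
      ∀ Minf : Y, HasSum (mixDiff M) Minf →
      ∀ L : ℝ, 0 < L →
      ‖(∑' k : Fin d → ℕ,
          if ∑ j, (β j + γ j) * (k j : ℝ) ≤ L then mixDiff M k else 0) - Minf‖ ≤
        (∏ j, K1 j) * C * Real.exp (-L / (1 + ρ)) *
          (L + 1) ^
            (((Finset.univ.filter fun j => γ j / β j = ρ).card : ℝ) - 1 +
              ∑ j ∈ Finset.univ.filter fun j => γ j / β j = ρ, β' j) := by
  obtain ⟨i, hi⟩ := hρmem
  have hρ : 0 < ρ := hi ▸ div_pos (hγ i) (hβ i)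
  have hρ1 : 0 < 1 + ρ := by linarith
  set a : ℝ := 1 / (1 + ρ) with ha
  have ha0 : 0 < a := by positivity
  set δ : Fin d → ℝ := fun j => β j * (ρ - γ j / β j) / (1 + ρ) with hδ
  have hδ0 : ∀ j, 0 ≤ δ j := fun j =>
    div_nonneg (mul_nonneg (hβ j).le (sub_nonneg.2 (hρub j))) hρ1.le
  have hβeq : ∀ j, a * (β j + γ j) + δ j = β j := by
    intro j
    have := (hβ j).ne'
    simp only [ha, hδ]
    field_simp
    ring
  have hδiff : ∀ j, δ j = 0 ↔ γ j / β j = ρ := by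
    intro j
    simp only [hδ, div_eq_zero_iff, mul_eq_zero, (hβ j).ne', hρ1.ne', false_or, or_false,
      sub_eq_zero]
    exact eq_comm
  obtain ⟨C, hC, h⟩ := exists_sum_compl_simplex_le (b := fun j => β j + γ j) ha0
    (fun j => add_pos (hβ j) (hγ j)) hδ0 hβ' i ((hδiff i).2 hi)
  refine ⟨C, hC, fun K1 hK1 M hM Minf hMinf L hL => ?_⟩
  have hexp : β' i + ∑ j : {j // j ≠ i}, (if δ j = 0 then β' j + 1 else 0) =
      ((Finset.univ.filter fun j => γ j / β j = ρ).card : ℝ) - 1 +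
        ∑ j ∈ Finset.univ.filter fun j => γ j / β j = ρ, β' j := by
    have h1 := Fintype.sum_eq_add_sum_subtype_ne
      (fun j => if δ j = 0 then β' j + 1 else 0) i
    rw [if_pos ((hδiff i).2 hi)] at h1
    have h2 : ∑ j, (if δ j = 0 then β' j + 1 else 0) =
        ((Finset.univ.filter fun j => γ j / β j = ρ).card : ℝ) +
          ∑ j ∈ Finset.univ.filter fun j => γ j / β j = ρ, β' j := by
      simp only [hδiff]
      rw [← Finset.sum_filter, Finset.sum_add_distrib, Finset.sum_const, nsmul_eq_mul, mul_one,
        add_comm]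
    linarith
  have hK : 0 < ∏ j, K1 j := Finset.prod_pos fun j _ => hK1 j
  set T : (Fin d → ℕ) → Y := fun k =>
    if ∑ j, (β j + γ j) * (k j : ℝ) ≤ L then 0 else mixDiff M k with hT
  set B : ℝ := (∏ j, K1 j) * C * Real.exp (-L / (1 + ρ)) *
    (L + 1) ^ (((Finset.univ.filter fun j => γ j / β j = ρ).card : ℝ) - 1 +
      ∑ j ∈ Finset.univ.filter fun j => γ j / β j = ρ, β' j) with hB
  have hTle : ∀ k, ‖T k‖ ≤ (∏ j, K1 j) * (if L < ∑ j, (β j + γ j) * (k j : ℝ) then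
      ∏ j, Real.exp (-(a * (β j + γ j) + δ j) * k j) * ((k j : ℝ) + 1) ^ β' j else 0) := by
    intro k
    by_cases hk : ∑ j, (β j + γ j) * (k j : ℝ) ≤ L
    · simp [hT, hk, not_lt.2 hk]
    · simp only [hT, if_neg hk, if_pos (not_le.1 hk), hβeq]
      refine (hM k).trans_eq ?_
      rw [← Finset.prod_mul_distrib]
      simp only [mul_assoc]
  have hfin : ∀ S : Finset (Fin d → ℕ), ∑ k ∈ S, ‖T k‖ ≤ B := by
    intro S
    obtain ⟨N, hN⟩ : ∃ N : ℕ, S ⊆ Fintype.piFinset (fun _ : Fin d => Finset.range N) := by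
      refine ⟨(S.sup fun k => Finset.univ.sup k) + 1, fun k hk => ?_⟩
      refine Fintype.mem_piFinset.2 fun j => Finset.mem_range.2 (Nat.lt_succ_of_le ?_)
      exact (Finset.le_sup (f := k) (Finset.mem_univ j)).trans
        (Finset.le_sup (f := fun k : Fin d → ℕ => Finset.univ.sup k) hk)
    calc _ ≤ ∑ k ∈ Fintype.piFinset (fun _ : Fin d => Finset.range N), ‖T k‖ :=
          Finset.sum_le_sum_of_subset_of_nonneg hN fun _ _ _ => norm_nonneg _
      _ ≤ (∏ j, K1 j) * (C * Real.exp (-a * L) *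
          (L + 1) ^ (β' i + ∑ j : {j // j ≠ i}, if δ j = 0 then β' j + 1 else 0)) := by
          refine (Finset.sum_le_sum fun k _ => hTle k).trans ?_
          rw [← Finset.mul_sum]
          refine mul_le_mul_of_nonneg_left ?_ hK.le
          convert h L hL.le N
      _ = B := by
          rw [hexp, hB, show -a * L = -L / (1 + ρ) by rw [ha]; ring]
          ring
  have hTn : Summable fun k => ‖T k‖ := summable_of_sum_le (fun _ => norm_nonneg _) hfin
  have hsub := hMinf.sub hTn.of_norm.hasSum
  have hfun : (fun k : Fin d → ℕ =>
      if ∑ j, (β j + γ j) * (k j : ℝ) ≤ L then mixDiff M k else 0) =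
      fun k => mixDiff M k - T k := by
    funext k
    simp only [hT]
    split_ifs <;> simp
  rw [hfun, hsub.tsum_eq, sub_sub_cancel_left, norm_neg]
  exact (norm_tsum_le_tsum_norm hTn).trans (hTn.tsum_le_of_sum_le hfin)
end

section
/- (Main theorem: breaking the curse of dimensionality) Let Y be a Banach space and M : ℕ^d → Y satisfy ‖(Δ_mix M)(k)‖_Y ≤ ∏_{j=1}^d K_{j,1} exp(−β_j k_j)(k_j+1)^{β'_j} for all k ∈ ℕ^d, with K_{j,1} > 0, β_j > 0, β'_j ≥ 0, and let the work bounds be given by γ_j > 0, γ'_j ≥ 0, K_{j,2} > 0. Set ρ := max_j γ_j/β_j, J := {j : γ_j/β_j = ρ}, d* := |J|, β'* := Σ_{j∈J} β'_j, γ'* := Σ_{j∈J} γ'_j, K₁ := ∏_j K_{j,1}, K₂ := ∏_j K_{j,2}, for L > 0 let I_L := {k ∈ ℕ^d : Σ_j (β_j+γ_j)k_j ≤ L}, and let M_∞ := Σ_{k∈ℕ^d} (Δ_mix M)(k) (absolutely convergent). Then there exist a constant C > 0 depending only on β, γ, β', γ', d, and an ε₀ > 0 such that for every 0 < ε ≤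 ε₀ there is an L > 0 with: (a) ‖S_{I_L}(M) − M_∞‖_Y ≤ ε, and (b) Σ_{k ∈ I_L} ∏_{j=1}^d K_{j,2} exp(γ_j k_j)(k_j+1)^{γ'_j} ≤ C K₁^ρ K₂ ε^{−ρ} |log ε|^{(d*−1)(1+ρ)+ρβ'*+γ'*}. -/
open scoped Classical

/-- A finite set of naturals whose elements differ by at most `D` has at most `D + 1` elements. -/
theorem card_le_of_forall_le_add (T : Finset ℕ) (D : ℕ)
    (h : ∀ x ∈ T, ∀ y ∈ T, x ≤ y + D) : T.card ≤ D + 1 := by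
  rcases T.eq_empty_or_nonempty with rfl | hT
  · simp
  · have hsub : T ⊆ Finset.Icc (T.min' hT) (T.min' hT + D) := fun x hx =>
      Finset.mem_Icc.2 ⟨T.min'_le x hx, h x hx _ (T.min'_mem hT)⟩
    have := Finset.card_le_card hsub
    rw [Nat.card_Icc] at this
    omega

/-- If forgetting the coordinate `j₀` is at most `D`-to-one on `S`, then a sum over `S` of products
not involving `j₀` is controlled by the product of the coordinatewise sums. -/
theorem sum_prod_erase_le_of_card_fiber_le {ι : Type*} [Fintype ι] (S : Finset (ι → ℕ)) (j₀ : ι)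
    (f : ι → ℕ → ℝ) (hf : ∀ j x, 0 ≤ f j x) (D : ℕ)
    (hD : ∀ k', (S.filter fun k => Function.update k j₀ 0 = k').card ≤ D) (H : ι → ℝ)
    (hH : ∀ j, j ≠ j₀ → ∑ x ∈ S.image (fun k => k j), f j x ≤ H j) :
    ∑ k ∈ S, ∏ j ∈ Finset.univ.erase j₀, f j (k j) ≤ D * ∏ j ∈ Finset.univ.erase j₀, H j := by
  have hG (k : ι → ℕ) : ∏ j ∈ Finset.univ.erase j₀, f j (k j) =
      ∏ j ∈ Finset.univ.erase j₀, f j (Function.update k j₀ 0 j) :=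
    Finset.prod_congr rfl fun j hj => by rw [Function.update_of_ne (Finset.ne_of_mem_erase hj)]
  have hnn (k : ι → ℕ) : 0 ≤ ∏ j ∈ Finset.univ.erase j₀, f j (k j) :=
    Finset.prod_nonneg fun j _ => hf j _
  rw [Finset.sum_congr rfl fun k _ => hG k,
    Finset.sum_comp (fun k => ∏ j ∈ Finset.univ.erase j₀, f j (k j))
      (fun k => Function.update k j₀ 0)]
  calc
    _ ≤ ∑ k ∈ S.image (fun k => Function.update k j₀ 0),
        (D : ℝ) * ∏ j ∈ Finset.univ.erase j₀, f j (k j) := by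
      refine Finset.sum_le_sum fun k _ => ?_
      rw [nsmul_eq_mul]
      exact mul_le_mul_of_nonneg_right (by exact_mod_cast hD k) (hnn k)
    _ = D * ∑ k ∈ S.image (fun k => Function.update k j₀ 0),
        ∏ j ∈ Finset.univ.erase j₀, f j (k j) := by rw [Finset.mul_sum]
    _ ≤ D * ∏ j ∈ Finset.univ.erase j₀, H j := by
      refine mul_le_mul_of_nonneg_left ?_ (Nat.cast_nonneg D)
      set g : ι → ℕ → ℝ := fun j x => if j = j₀ then 1 else f j x with hg
      have hgnn (j x) : 0 ≤ g j x := by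
        simp only [hg]; split_ifs; exacts [zero_le_one, hf j x]
      set t : ι → Finset ℕ := fun j => S.image fun k => Function.update k j₀ 0 j with ht
      have hprod (k : ι → ℕ) :
          ∏ j ∈ Finset.univ.erase j₀, f j (k j) = ∏ j, g j (k j) := by
        rw [← Finset.mul_prod_erase _ _ (Finset.mem_univ j₀)]
        simp only [hg, if_true, one_mul]
        exact Finset.prod_congr rfl fun j hj => by rw [if_neg (Finset.ne_of_mem_erase hj)]
      calc
        _ = ∑ k ∈ S.image (fun k => Function.update k j₀ 0), ∏ j, g j (k j) :=
          Finset.sum_congr rfl fun k _ => hprod k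
        _ ≤ ∑ k ∈ Fintype.piFinset t, ∏ j, g j (k j) := by
          refine Finset.sum_le_sum_of_subset_of_nonneg ?_
            fun k _ _ => Finset.prod_nonneg fun j _ => hgnn j _
          intro k' hk'
          obtain ⟨k, hk, rfl⟩ := Finset.mem_image.1 hk'
          exact Fintype.mem_piFinset.2 fun j => Finset.mem_image.2 ⟨k, hk, rfl⟩
        _ = ∏ j, ∑ x ∈ t j, g j x := (Finset.prod_univ_sum t g).symm
        _ = (∑ x ∈ t j₀, g j₀ x) * ∏ j ∈ Finset.univ.erase j₀, ∑ x ∈ t j, g j x :=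
          (Finset.mul_prod_erase _ _ (Finset.mem_univ j₀)).symm
        _ ≤ 1 * ∏ j ∈ Finset.univ.erase j₀, H j := by
          refine mul_le_mul ?_ ?_ (Finset.prod_nonneg fun j _ =>
            Finset.sum_nonneg fun x _ => hgnn j x) zero_le_one
          · have hsub : t j₀ ⊆ {0} := by
              intro x hx
              obtain ⟨k, _, rfl⟩ := Finset.mem_image.1 hx
              simp
            have := Finset.card_le_card hsub
            simp only [hg, if_true, Finset.sum_const, nsmul_eq_mul, mul_one]
            exact_mod_cast this
          · refine Finset.prod_le_prod (fun j _ => Finset.sum_nonneg fun x _ => hgnn j x) ?_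
            intro j hj
            have hne := Finset.ne_of_mem_erase hj
            have hteq : t j = S.image fun k => k j := by
              simp only [ht, Function.update_of_ne hne]
            rw [hteq]
            simpa only [hg, if_neg hne] using hH j hne
        _ = _ := one_mul _

theorem summable_add_one_rpow_mul_exp (p : ℝ) {c : ℝ} (hc : 0 < c) :
    Summable fun k : ℕ => ((k : ℝ) + 1) ^ p * Real.exp (-(c * k)) := by
  obtain ⟨m, hm⟩ := exists_nat_ge p
  have h := (summable_nat_add_iff 1).2 (Real.summable_pow_mul_exp_neg_nat_mul m hc)
  refine Summable.of_nonneg_of_le (fun k => by positivity) (fun k => ?_)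
    (h.mul_left (Real.exp c))
  have h1 : ((k : ℝ) + 1) ^ p ≤ ((k : ℝ) + 1) ^ m := by
    rw [← Real.rpow_natCast]
    exact Real.rpow_le_rpow_of_exponent_le (by linarith [Nat.cast_nonneg (α := ℝ) k]) hm
  have h2 : Real.exp (-(c * k)) = Real.exp c * Real.exp (-c * ((k + 1 : ℕ) : ℝ)) := by
    rw [← Real.exp_add]; congr 1; push_cast; ring
  rw [h2]
  push_cast
  calc _ ≤ ((k : ℝ) + 1) ^ m * (Real.exp c * Real.exp (-c * ((k : ℝ) + 1))) := by gcongr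
    _ = _ := by ring

/-- Coordinatewise sums occurring in a shell `n ≤ ∑ w k < n + 1`. -/
theorem exists_sum_weight_le {p c w : ℝ} (hp : 0 ≤ p) (hc : 0 ≤ c) (hw : 0 < w) (P : Prop)
    [Decidable P] (hP : ¬ P → 0 < c) :
    ∃ C > 0, ∀ (n : ℕ) (T : Finset ℕ), (∀ x ∈ T, w * x < n + 1) →
      ∑ x ∈ T, ((x : ℝ) + 1) ^ p * Real.exp (-(c * x)) ≤
        C * ((n : ℝ) + 1) ^ (if P then 1 + p else 0) := by
  by_cases h : P
  · simp only [if_pos h]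
    refine ⟨(1 / w + 1) ^ (1 + p), by positivity, fun n T hT => ?_⟩
    have hx1 (x) (hx : x ∈ T) : (x : ℝ) + 1 ≤ (1 / w + 1) * (n + 1) := by
      have : (x : ℝ) ≤ 1 / w * (n + 1) := by
        rw [one_div_mul_eq_div, le_div_iff₀ hw]; linarith [hT x hx]
      nlinarith [Nat.cast_nonneg (α := ℝ) n]
    have hcard : (T.card : ℝ) ≤ (1 / w + 1) * (n + 1) := by
      have hsub : T ⊆ Finset.range ⌊(1 / w + 1) * ((n : ℝ) + 1)⌋₊ := fun x hx => by
        rw [Finset.mem_range, Nat.lt_iff_add_one_le]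
        refine Nat.le_floor ?_
        push_cast
        exact hx1 x hx
      have := Finset.card_le_card hsub
      rw [Finset.card_range] at this
      exact (Nat.cast_le.2 this).trans (Nat.floor_le (by positivity))
    calc _ ≤ ∑ x ∈ T, ((1 / w + 1) * ((n : ℝ) + 1)) ^ p := by
          refine Finset.sum_le_sum fun x hx => ?_
          calc _ ≤ ((x : ℝ) + 1) ^ p * 1 := by
                gcongr
                exact Real.exp_le_one_iff.2 (by simp only [Left.neg_nonpos_iff]; positivity)
            _ ≤ _ := by
                rw [mul_one]
                exact Real.rpow_le_rpow (by positivity) (hx1 x hx) hp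
      _ = T.card * ((1 / w + 1) * ((n : ℝ) + 1)) ^ p := by simp
      _ ≤ ((1 / w + 1) * (n + 1)) * ((1 / w + 1) * ((n : ℝ) + 1)) ^ p := by gcongr
      _ = ((1 / w + 1) * ((n : ℝ) + 1)) ^ (1 + p) := by
          rw [Real.rpow_add (by positivity), Real.rpow_one]
      _ = _ := Real.mul_rpow (by positivity) (by positivity)
  · simp only [if_neg h, Real.rpow_zero, mul_one]
    have hs := summable_add_one_rpow_mul_exp p (hP h)
    refine ⟨∑' x : ℕ, ((x : ℝ) + 1) ^ p * Real.exp (-(c * x)), ?_, fun n T _ =>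
      hs.sum_le_tsum T fun x _ => by positivity⟩
    exact hs.tsum_pos (fun x => by positivity) 0 (by positivity)

/-- Mass of a shell `n ≤ ∑ w k < n + 1` for a weight decaying exponentially off `J`. -/
theorem exists_shell_sum_le {ι : Type*} [Fintype ι] (p c w : ι → ℝ) (hp : ∀ j, 0 ≤ p j)
    (hc : ∀ j, 0 ≤ c j) (hw : ∀ j, 0 < w j) (J : Finset ι) (hJ : J.Nonempty)
    (hcJ : ∀ j, j ∉ J → 0 < c j) :
    ∃ C > 0, ∀ (n : ℕ) (S : Finset (ι → ℕ)),
      (∀ k ∈ S, (n : ℝ) ≤ ∑ j, w j * k j ∧ ∑ j, w j * (k j : ℝ) < n + 1) →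
      ∑ k ∈ S, ∏ j, ((k j : ℝ) + 1) ^ p j * Real.exp (-(c j * k j)) ≤
        C * ((n : ℝ) + 1) ^ ((J.card : ℝ) - 1 + ∑ j ∈ J, p j) := by
  obtain ⟨j₀, hj₀⟩ := hJ
  choose C hC hCsum using fun j =>
    exists_sum_weight_le (hp j) (hc j) (hw j) (j ∈ J) (hcJ j)
  set A : ℝ := 1 / w j₀ + 1 with hA
  have hApos : 0 < A := by have := hw j₀; positivity
  set D : ℕ := ⌊1 / w j₀⌋₊ + 1 with hD
  refine ⟨A ^ p j₀ * (D * ∏ j ∈ Finset.univ.erase j₀, C j),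
    mul_pos (by positivity) (mul_pos (by positivity) (Finset.prod_pos fun j _ => hC j)),
    fun n S hS => ?_⟩
  have hcoord (k) (hk : k ∈ S) (j) : w j * (k j : ℝ) < n + 1 :=
    (Finset.single_le_sum (f := fun j => w j * (k j : ℝ))
      (fun i _ => mul_nonneg (hw i).le (Nat.cast_nonneg _)) (Finset.mem_univ j)).trans_lt
        (hS k hk).2
  have hfiber (k') : (S.filter fun k => Function.update k j₀ 0 = k').card ≤ D := by
    have hinj : Set.InjOn (fun k : ι → ℕ => k j₀)
        (S.filter fun k => Function.update k j₀ 0 = k') := by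
      intro k hk l hl hkl
      have h1 := (Finset.mem_filter.1 hk).2
      have h2 := (Finset.mem_filter.1 hl).2
      funext j
      by_cases hj : j = j₀
      · subst hj; exact hkl
      · have := congrFun (h1.trans h2.symm) j
        simpa [Function.update_of_ne hj] using this
    rw [← Finset.card_image_of_injOn hinj]
    refine card_le_of_forall_le_add _ _ fun x hx y hy => ?_
    obtain ⟨k, hk, rfl⟩ := Finset.mem_image.1 hx
    obtain ⟨l, hl, rfl⟩ := Finset.mem_image.1 hy
    obtain ⟨hkS, hk⟩ := Finset.mem_filter.1 hk
    obtain ⟨hlS, hl⟩ := Finset.mem_filter.1 hl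
    have hrest : ∑ j ∈ Finset.univ.erase j₀, w j * (k j : ℝ) =
        ∑ j ∈ Finset.univ.erase j₀, w j * (l j : ℝ) :=
      Finset.sum_congr rfl fun j hj => by
        have := congrFun (hk.trans hl.symm) j
        rw [Function.update_of_ne (Finset.ne_of_mem_erase hj),
          Function.update_of_ne (Finset.ne_of_mem_erase hj)] at this
        rw [this]
    have h1 := (hS k hkS).2
    have h2 := (hS l hlS).1
    rw [← Finset.add_sum_erase _ _ (Finset.mem_univ j₀)] at h1 h2
    have h3 : w j₀ * ((k j₀ : ℝ) - l j₀) ≤ 1 := by linarith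
    have h4 : (k j₀ : ℝ) - l j₀ ≤ 1 / w j₀ := by
      rw [le_div_iff₀ (hw j₀)]; linarith
    show k j₀ ≤ l j₀ + ⌊1 / w j₀⌋₊
    have h5 : k j₀ - l j₀ ≤ ⌊1 / w j₀⌋₊ := by
      rcases le_total (k j₀) (l j₀) with hle | hle
      · simp [Nat.sub_eq_zero_of_le hle]
      · exact Nat.le_floor (by rw [Nat.cast_sub hle]; exact h4)
    omega
  have hmain := sum_prod_erase_le_of_card_fiber_le S j₀
    (fun j x => ((x : ℝ) + 1) ^ p j * Real.exp (-(c j * x))) (fun j x => by positivity) D hfiber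
    (fun j => C j * ((n : ℝ) + 1) ^ (if j ∈ J then 1 + p j else 0)) (fun j _ => by
      refine hCsum j n _ fun x hx => ?_
      obtain ⟨k, hk, rfl⟩ := Finset.mem_image.1 hx
      exact hcoord k hk j)
  have hexp : p j₀ + ∑ j ∈ Finset.univ.erase j₀, (if j ∈ J then 1 + p j else 0) =
      (J.card : ℝ) - 1 + ∑ j ∈ J, p j := by
    have h1 : ∑ j, (if j ∈ J then 1 + p j else 0) = (J.card : ℝ) + ∑ j ∈ J, p j := by
      rw [Finset.sum_ite_mem, Finset.univ_inter, Finset.sum_add_distrib]; simp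
    rw [← Finset.add_sum_erase _ _ (Finset.mem_univ j₀), if_pos hj₀] at h1
    linarith
  calc _ ≤ ∑ k ∈ S, (A * ((n : ℝ) + 1)) ^ p j₀ * ∏ j ∈ Finset.univ.erase j₀,
        ((k j : ℝ) + 1) ^ p j * Real.exp (-(c j * k j)) := by
        refine Finset.sum_le_sum fun k hk => ?_
        rw [← Finset.mul_prod_erase _ _ (Finset.mem_univ j₀)]
        refine mul_le_mul_of_nonneg_right ?_ (Finset.prod_nonneg fun j _ => by positivity)
        have h1 : (k j₀ : ℝ) + 1 ≤ A * (n + 1) := by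
          have : (k j₀ : ℝ) ≤ 1 / w j₀ * (n + 1) := by
            rw [one_div_mul_eq_div, le_div_iff₀ (hw j₀)]; linarith [hcoord k hk j₀]
          rw [hA]
          nlinarith [Nat.cast_nonneg (α := ℝ) n]
        calc _ ≤ ((k j₀ : ℝ) + 1) ^ p j₀ * 1 := by
              gcongr
              refine Real.exp_le_one_iff.2 ?_
              have := mul_nonneg (hc j₀) (Nat.cast_nonneg (α := ℝ) (k j₀))
              linarith
          _ ≤ _ := by
              rw [mul_one]
              exact Real.rpow_le_rpow (by positivity) h1 (hp j₀)
    _ ≤ (A * ((n : ℝ) + 1)) ^ p j₀ * (D * ∏ j ∈ Finset.univ.erase j₀,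
        (C j * ((n : ℝ) + 1) ^ (if j ∈ J then 1 + p j else 0))) := by
        rw [← Finset.mul_sum]
        gcongr
    _ = _ := by
        rw [Finset.prod_mul_distrib, ← Real.rpow_sum_of_pos (by positivity), ← hexp,
          Real.rpow_add (by positivity), Real.mul_rpow hApos.le (by positivity)]
        ring

/-- Sums over the simplex `∑ w k ≤ L` with exponentially growing weights. -/
theorem exists_simplex_sum_le {ι : Type*} [Fintype ι] (w : ι → ℝ) (hw : ∀ j, 0 < w j)
    (u : (ι → ℕ) → ℝ) (P C : ℝ) (hP : 0 ≤ P) (hC : 0 < C) (hu : ∀ k, 0 ≤ u k)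
    (hshell : ∀ (n : ℕ) (S : Finset (ι → ℕ)),
      (∀ k ∈ S, (n : ℝ) ≤ ∑ j, w j * k j ∧ ∑ j, w j * (k j : ℝ) < n + 1) →
      ∑ k ∈ S, u k ≤ C * ((n : ℝ) + 1) ^ P) {b : ℝ} (hb : 0 < b) :
    ∃ C' > 0, ∀ L : ℝ, 0 < L → ∀ S : Finset (ι → ℕ), (∀ k ∈ S, ∑ j, w j * (k j : ℝ) ≤ L) →
      ∑ k ∈ S, Real.exp (b * ∑ j, w j * (k j : ℝ)) * u k ≤
        C' * Real.exp (b * L) * (L + 1) ^ P := by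
  have hr : 1 < Real.exp b := Real.one_lt_exp_iff.2 hb
  have hr' : 0 < Real.exp b - 1 := by linarith
  refine ⟨C * (Real.exp b * (Real.exp b / (Real.exp b - 1))), by positivity, fun L hL S hS => ?_⟩
  have hnn (k : ι → ℕ) : 0 ≤ ∑ j, w j * (k j : ℝ) :=
    Finset.sum_nonneg fun j _ => mul_nonneg (hw j).le (Nat.cast_nonneg _)
  have hmaps : ∀ k ∈ S, ⌊∑ j, w j * (k j : ℝ)⌋₊ ∈ Finset.range (⌊L⌋₊ + 1) := fun k hk =>
    Finset.mem_range.2 (Nat.lt_succ_of_le (Nat.floor_le_floor (hS k hk)))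
  have hfl : (⌊L⌋₊ : ℝ) ≤ L := Nat.floor_le hL.le
  rw [← Finset.sum_fiberwise_of_maps_to hmaps]
  calc _ ≤ ∑ n ∈ Finset.range (⌊L⌋₊ + 1),
        (C * (L + 1) ^ P * Real.exp b) * Real.exp b ^ n := by
        refine Finset.sum_le_sum fun n hn => ?_
        have hnL : (n : ℝ) ≤ L :=
          (Nat.cast_le.2 (Nat.lt_succ_iff.1 (Finset.mem_range.1 hn))).trans hfl
        set F := S.filter fun k => ⌊∑ j, w j * (k j : ℝ)⌋₊ = n with hF
        have hFs (k) (hk : k ∈ F) :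
            (n : ℝ) ≤ ∑ j, w j * k j ∧ ∑ j, w j * (k j : ℝ) < n + 1 :=
          (Nat.floor_eq_iff (hnn k)).1 (Finset.mem_filter.1 hk).2
        calc _ ≤ ∑ k ∈ F, Real.exp (b * (n + 1)) * u k := by
              refine Finset.sum_le_sum fun k hk => ?_
              have := (hFs k hk).2.le
              have := hu k
              gcongr
          _ ≤ Real.exp (b * (n + 1)) * (C * ((n : ℝ) + 1) ^ P) := by
              rw [← Finset.mul_sum]
              gcongr
              exact hshell n F hFs
          _ ≤ Real.exp (b * (n + 1)) * (C * (L + 1) ^ P) := by gcongr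
          _ = _ := by
              rw [mul_add, Real.exp_add, mul_one, mul_comm b, Real.exp_nat_mul]; ring
    _ = (C * (L + 1) ^ P * Real.exp b) *
        ((Real.exp b ^ (⌊L⌋₊ + 1) - 1) / (Real.exp b - 1)) := by
        rw [← Finset.mul_sum, geom_sum_eq hr.ne']
    _ ≤ (C * (L + 1) ^ P * Real.exp b) *
        ((Real.exp b * Real.exp (b * L)) / (Real.exp b - 1)) := by
        have : Real.exp b ^ (⌊L⌋₊ + 1) - 1 ≤ Real.exp b * Real.exp (b * L) := by
          rw [pow_succ', ← Real.exp_nat_mul, mul_comm _ b]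
          have : Real.exp (b * (⌊L⌋₊ : ℝ)) ≤ Real.exp (b * L) := by gcongr
          nlinarith
        gcongr
    _ = _ := by ring

/-- Sums over the complement of the simplex with exponentially decaying weights. -/
theorem exists_tail_sum_le {ι : Type*} [Fintype ι] (w : ι → ℝ) (hw : ∀ j, 0 < w j)
    (u : (ι → ℕ) → ℝ) (P C : ℝ) (hP : 0 ≤ P) (hC : 0 < C) (hu : ∀ k, 0 ≤ u k)
    (hshell : ∀ (n : ℕ) (S : Finset (ι → ℕ)),
      (∀ k ∈ S, (n : ℝ) ≤ ∑ j, w j * k j ∧ ∑ j, w j * (k j : ℝ) < n + 1) →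
      ∑ k ∈ S, u k ≤ C * ((n : ℝ) + 1) ^ P) {a : ℝ} (ha : 0 < a) :
    ∃ C' > 0, ∀ L : ℝ, 0 < L → ∀ S : Finset (ι → ℕ), (∀ k ∈ S, L < ∑ j, w j * (k j : ℝ)) →
      ∑ k ∈ S, Real.exp (-(a * ∑ j, w j * (k j : ℝ))) * u k ≤
        C' * Real.exp (-(a * L)) * (L + 1) ^ P := by
  have hs := summable_add_one_rpow_mul_exp P ha
  set V : ℝ := ∑' m : ℕ, ((m : ℝ) + 1) ^ P * Real.exp (-(a * m)) with hV
  have hVpos : 0 < V := hs.tsum_pos (fun x => by positivity) 0 (by positivity)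
  refine ⟨C * Real.exp a * V, by positivity, fun L hL S hS => ?_⟩
  have hnn (k : ι → ℕ) : 0 ≤ ∑ j, w j * (k j : ℝ) :=
    Finset.sum_nonneg fun j _ => mul_nonneg (hw j).le (Nat.cast_nonneg _)
  set N := ⌊L⌋₊ with hN
  have hfl : (N : ℝ) ≤ L := Nat.floor_le hL.le
  have hfl' : L < N + 1 := Nat.lt_floor_add_one L
  have hle (k) (hk : k ∈ S) : N ≤ ⌊∑ j, w j * (k j : ℝ)⌋₊ := Nat.floor_le_floor (hS k hk).le
  have hmaps : ∀ k ∈ S, ⌊∑ j, w j * (k j : ℝ)⌋₊ - N ∈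
      S.image fun k => ⌊∑ j, w j * (k j : ℝ)⌋₊ - N := fun k hk => Finset.mem_image_of_mem _ hk
  rw [← Finset.sum_fiberwise_of_maps_to hmaps]
  calc _ ≤ ∑ m ∈ S.image fun k => ⌊∑ j, w j * (k j : ℝ)⌋₊ - N,
        (C * Real.exp a * Real.exp (-(a * L)) * (L + 1) ^ P) *
          (((m : ℝ) + 1) ^ P * Real.exp (-(a * m))) := by
        refine Finset.sum_le_sum fun m _ => ?_
        set F := S.filter fun k => ⌊∑ j, w j * (k j : ℝ)⌋₊ - N = m with hF
        have hFs (k) (hk : k ∈ F) : ((N + m : ℕ) : ℝ) ≤ ∑ j, w j * k j ∧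
            ∑ j, w j * (k j : ℝ) < (N + m : ℕ) + 1 := by
          obtain ⟨hkS, hkm⟩ := Finset.mem_filter.1 hk
          refine (Nat.floor_eq_iff (hnn k)).1 ?_
          have := hle k hkS
          omega
        calc _ ≤ ∑ k ∈ F, Real.exp (-(a * (N + m : ℕ))) * u k := by
              refine Finset.sum_le_sum fun k hk => ?_
              have := (hFs k hk).1
              have := hu k
              gcongr
          _ ≤ Real.exp (-(a * (N + m : ℕ))) * (C * (((N + m : ℕ) : ℝ) + 1) ^ P) := by
              rw [← Finset.mul_sum]
              gcongr
              exact hshell _ F hFs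
          _ ≤ (Real.exp a * Real.exp (-(a * L)) * Real.exp (-(a * m))) *
              (C * ((L + 1) * ((m : ℝ) + 1)) ^ P) := by
              have h1 : Real.exp (-(a * (N + m : ℕ))) ≤
                  Real.exp a * Real.exp (-(a * L)) * Real.exp (-(a * m)) := by
                rw [← Real.exp_add, ← Real.exp_add]
                refine Real.exp_le_exp.2 ?_
                push_cast
                nlinarith
              have h2 : ((N + m : ℕ) : ℝ) + 1 ≤ (L + 1) * ((m : ℝ) + 1) := by
                push_cast
                nlinarith [Nat.cast_nonneg (α := ℝ) m]
              gcongr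
          _ = _ := by
              rw [Real.mul_rpow (by positivity) (by positivity)]; ring
    _ ≤ (C * Real.exp a * Real.exp (-(a * L)) * (L + 1) ^ P) * V := by
        rw [← Finset.mul_sum]
        gcongr
        exact hs.sum_le_tsum _ fun x _ => by positivity
    _ = _ := by ring

/-- Choice of the level `L ~ (t + P log t) / a` with `t = |log ε|`. -/
theorem eventually_level_bounds {a : ℝ} (ha : 0 < a) (P B : ℝ) :
    ∀ᶠ t : ℝ in Filter.atTop, 0 < t ∧ 0 < (t + P * Real.log t + B) / a ∧
      (t + P * Real.log t + B) / a + 1 ≤ 2 / a * t := by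
  have h1 := Real.isLittleO_log_id_atTop.const_mul_left P
  have h2 : (fun _ : ℝ => |B| + a) =o[Filter.atTop] (id : ℝ → ℝ) :=
    Asymptotics.isLittleO_const_id_atTop _
  filter_upwards [h1.bound (show (0 : ℝ) < 1 / 4 by norm_num),
    h2.bound (show (0 : ℝ) < 1 / 4 by norm_num), Filter.eventually_gt_atTop 0] with t h1 h2 ht
  simp only [Real.norm_eq_abs, id, abs_of_pos ht] at h1 h2
  rw [abs_of_nonneg (by positivity)] at h2
  have h3 := abs_le.1 h1
  have h4 := abs_le.1 (le_refl |B|)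
  refine ⟨ht, div_pos (by linarith) ha, ?_⟩
  rw [div_add_one ha.ne', div_mul_eq_mul_div, div_le_div_iff_of_pos_right ha]
  linarith

/-- main theorem: breaking the curse of dimensionality: under the
decay bound `‖(Δ_mix M)(k)‖ ≤ ∏_j K_{j,1} exp(-β_j k_j)(k_j+1)^{β'_j}` and with
work bounds `∏_j K_{j,2} exp(γ_j k_j)(k_j+1)^{γ'_j}`, setting `ρ = max_j γ_j/β_j`,
`J = {j : γ_j/β_j = ρ}`, `d* = |J|`, `β'* = ∑_{j∈J} β'_j`, `γ'* = ∑_{j∈J} γ'_j`,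
`K₁ = ∏_j K_{j,1}`, `K₂ = ∏_j K_{j,2}`, there are `C = C(β,γ,β',γ',d) > 0` and
`ε₀ > 0` such that for all `0 < ε ≤ ε₀` there is `L > 0` with
`‖S_{I_L}(M) - M_∞‖ ≤ ε` and
`work(S_{I_L}(M)) ≤ C K₁^ρ K₂ ε^{-ρ} |log ε|^{(d*-1)(1+ρ)+ρβ'*+γ'*}`, where
`I_L = {k : ∑_j (β_j+γ_j)k_j ≤ L}`. -/
theorem smolyak_breaks_curse_of_dimensionality
    {d : ℕ} (hd : 1 ≤ d) {Y : Type*} [NormedAddCommGroup Y] [NormedSpace ℝ Y]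
    [CompleteSpace Y]
    (β β' γ γ' : Fin d → ℝ)
    (hβ : ∀ j, 0 < β j) (hβ' : ∀ j, 0 ≤ β' j)
    (hγ : ∀ j, 0 < γ j) (hγ' : ∀ j, 0 ≤ γ' j)
    (ρ : ℝ) (hρmem : ∃ j, γ j / β j = ρ) (hρub : ∀ j, γ j / β j ≤ ρ) :
    ∃ C > (0 : ℝ),
      ∀ K1 K2 : Fin d → ℝ, (∀ j, 0 < K1 j) → (∀ j, 0 < K2 j) →
      ∀ M : (Fin d → ℕ) → Y,
      (∀ k : Fin d → ℕ, ‖mixDiff M k‖ ≤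
        ∏ j, K1 j * Real.exp (-β j * (k j : ℝ)) * ((k j : ℝ) + 1) ^ (β' j)) →
      ∀ Minf : Y, HasSum (mixDiff M) Minf →
      ∃ ε₀ > (0 : ℝ), ∀ ε : ℝ, 0 < ε → ε ≤ ε₀ →
        ∃ L > (0 : ℝ),
          ‖(∑' k : Fin d → ℕ,
              if ∑ j, (β j + γ j) * (k j : ℝ) ≤ L then mixDiff M k else 0) - Minf‖
            ≤ ε ∧
          (∑' k : Fin d → ℕ,
            if ∑ j, (β j + γ j) * (k j : ℝ) ≤ L
            then ∏ j, K2 j * Real.exp (γ j * (k j : ℝ)) * ((k j : ℝ) + 1) ^ (γ' j)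
            else 0) ≤
          C * (∏ j, K1 j) ^ ρ * (∏ j, K2 j) * ε ^ (-ρ) *
            |Real.log ε| ^
              ((((Finset.univ.filter fun j => γ j / β j = ρ).card : ℝ) - 1) * (1 + ρ) +
                ρ * (∑ j ∈ Finset.univ.filter fun j => γ j / β j = ρ, β' j) +
                (∑ j ∈ Finset.univ.filter fun j => γ j / β j = ρ, γ' j)) := by
  obtain ⟨i₀, hi₀⟩ := hρmem
  have hρ : 0 < ρ := hi₀ ▸ div_pos (hγ i₀) (hβ i₀)
  set J : Finset (Fin d) := Finset.univ.filter fun j => γ j / β j = ρ with hJdef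
  have hi₀J : i₀ ∈ J := Finset.mem_filter.2 ⟨Finset.mem_univ _, hi₀⟩
  have hJ : J.Nonempty := ⟨i₀, hi₀J⟩
  have hJcard : (1 : ℝ) ≤ J.card := by exact_mod_cast hJ.card_pos
  set w : Fin d → ℝ := fun j => β j + γ j with hw
  have hwpos (j) : 0 < w j := add_pos (hβ j) (hγ j)
  set c : Fin d → ℝ := fun j => (ρ * β j - γ j) / (1 + ρ) with hc
  have hcnn (j) : 0 ≤ c j :=
    div_nonneg (sub_nonneg.2 ((div_le_iff₀ (hβ j)).1 (hρub j))) (by positivity)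
  have hcJ (j) (hj : j ∉ J) : 0 < c j := by
    have hne : γ j / β j ≠ ρ := fun h => hj (Finset.mem_filter.2 ⟨Finset.mem_univ _, h⟩)
    exact div_pos (sub_pos.2 ((div_lt_iff₀ (hβ j)).1 (lt_of_le_of_ne (hρub j) hne)))
      (by positivity)
  set a : ℝ := 1 / (1 + ρ) with ha
  have hapos : 0 < a := by positivity
  set PE : ℝ := (J.card : ℝ) - 1 + ∑ j ∈ J, β' j with hPE
  set PW : ℝ := (J.card : ℝ) - 1 + ∑ j ∈ J, γ' j with hPW
  have hPEnn : 0 ≤ PE := add_nonneg (by linarith) (Finset.sum_nonneg fun j _ => hβ' j)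
  have hPWnn : 0 ≤ PW := add_nonneg (by linarith) (Finset.sum_nonneg fun j _ => hγ' j)
  obtain ⟨C₁, hC₁, hshell₁⟩ := exists_shell_sum_le β' c w hβ' hcnn hwpos J hJ hcJ
  obtain ⟨C₂, hC₂, hshell₂⟩ := exists_shell_sum_le γ' c w hγ' hcnn hwpos J hJ hcJ
  obtain ⟨CE, hCE, htail⟩ := exists_tail_sum_le w hwpos _ PE C₁ hPEnn hC₁
    (fun k => Finset.prod_nonneg fun j _ => by positivity) hshell₁ hapos
  obtain ⟨CW, hCW, hsimplex⟩ := exists_simplex_sum_le w hwpos _ PW C₂ hPWnn hC₂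
    (fun k => Finset.prod_nonneg fun j _ => by positivity) hshell₂ (mul_pos hρ hapos)
  refine ⟨CW * (2 / a) ^ PW * (CE * (2 / a) ^ PE) ^ ρ, by positivity, ?_⟩
  intro K1 K2 hK1 hK2 M hM Minf hMinf
  have hκ₁ : 0 < ∏ j, K1 j := Finset.prod_pos fun j _ => hK1 j
  have hκ₂ : 0 < ∏ j, K2 j := Finset.prod_pos fun j _ => hK2 j
  set κ₁ := ∏ j, K1 j
  set κ₂ := ∏ j, K2 j
  set Q : ℝ := κ₁ * (CE * (2 / a) ^ PE) with hQ
  have hQpos : 0 < Q := by positivity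
  obtain ⟨T, hT⟩ := Filter.eventually_atTop.1 (eventually_level_bounds hapos PE (Real.log Q))
  refine ⟨Real.exp (-T), Real.exp_pos _, fun ε hε hεT => ?_⟩
  have hlog : Real.log ε ≤ -T := (Real.log_le_iff_le_exp hε).2 hεT
  set t : ℝ := -Real.log ε with ht
  obtain ⟨htpos, hL, hLt⟩ := hT t (by linarith)
  have habs : |Real.log ε| = t := by rw [abs_of_neg (by linarith)]
  set L : ℝ := (t + PE * Real.log t + Real.log Q) / a with hLdef
  have haL : a * L = t + PE * Real.log t + Real.log Q := by
    rw [hLdef]; field_simp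
  have hexpE : Real.exp (-(a * L)) = ε * t ^ (-PE) / Q := by
    rw [haL, Real.rpow_def_of_pos htpos, eq_div_iff hQpos.ne']
    calc _ = Real.exp (-(t + PE * Real.log t + Real.log Q)) * Real.exp (Real.log Q) := by
          rw [Real.exp_log hQpos]
      _ = Real.exp (Real.log ε) * Real.exp (Real.log t * -PE) := by
          rw [← Real.exp_add, ← Real.exp_add]
          congr 1
          rw [ht]; ring
      _ = _ := by rw [Real.exp_log hε]
  have hexpW : Real.exp (ρ * a * L) = ε ^ (-ρ) * t ^ (ρ * PE) * Q ^ ρ := by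
    rw [mul_assoc, haL, Real.rpow_def_of_pos htpos, Real.rpow_def_of_pos hε,
      Real.rpow_def_of_pos hQpos, ← Real.exp_add, ← Real.exp_add]
    congr 1
    rw [ht]; ring
  have hpow {P : ℝ} (hP : 0 ≤ P) : (L + 1) ^ P ≤ (2 / a) ^ P * t ^ P := by
    rw [← Real.mul_rpow (by positivity) htpos.le]
    exact Real.rpow_le_rpow (by linarith) hLt hP
  have hfacE (k : Fin d → ℕ) :
      ∏ j, K1 j * Real.exp (-β j * (k j : ℝ)) * ((k j : ℝ) + 1) ^ (β' j) =
        κ₁ * (Real.exp (-(a * ∑ j, w j * (k j : ℝ))) *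
          ∏ j, ((k j : ℝ) + 1) ^ β' j * Real.exp (-(c j * k j))) := by
    rw [Finset.mul_sum, ← Finset.sum_neg_distrib, Real.exp_sum, ← Finset.prod_mul_distrib,
      ← Finset.prod_mul_distrib]
    refine Finset.prod_congr rfl fun j _ => ?_
    have : Real.exp (-β j * (k j : ℝ)) =
        Real.exp (-(a * (w j * (k j : ℝ)))) * Real.exp (-(c j * k j)) := by
      rw [← Real.exp_add]
      congr 1
      simp only [ha, hw, hc]
      field_simp
      ring
    rw [this]; ring
  have hfacW (k : Fin d → ℕ) :
      ∏ j, K2 j * Real.exp (γ j * (k j : ℝ)) * ((k j : ℝ) + 1) ^ (γ' j) =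
        κ₂ * (Real.exp (ρ * a * ∑ j, w j * (k j : ℝ)) *
          ∏ j, ((k j : ℝ) + 1) ^ γ' j * Real.exp (-(c j * k j))) := by
    rw [Finset.mul_sum, Real.exp_sum, ← Finset.prod_mul_distrib, ← Finset.prod_mul_distrib]
    refine Finset.prod_congr rfl fun j _ => ?_
    have : Real.exp (γ j * (k j : ℝ)) =
        Real.exp (ρ * a * (w j * (k j : ℝ))) * Real.exp (-(c j * k j)) := by
      rw [← Real.exp_add]
      congr 1
      simp only [ha, hw, hc]
      field_simp
      ring
    rw [this]; ring
  refine ⟨L, hL, ?_, ?_⟩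
  · set g : (Fin d → ℕ) → ℝ := fun k => if ∑ j, w j * (k j : ℝ) ≤ L then 0 else
      ∏ j, K1 j * Real.exp (-β j * (k j : ℝ)) * ((k j : ℝ) + 1) ^ (β' j) with hg
    have hgnn (k) : 0 ≤ g k := by
      simp only [hg]
      split_ifs
      · exact le_rfl
      · exact (norm_nonneg _).trans (hM k)
    have hgsum (S : Finset (Fin d → ℕ)) : ∑ k ∈ S, g k ≤ ε := by
      calc ∑ k ∈ S, g k = ∑ k ∈ S.filter fun k => ¬ ∑ j, w j * (k j : ℝ) ≤ L,
            ∏ j, K1 j * Real.exp (-β j * (k j : ℝ)) * ((k j : ℝ) + 1) ^ (β' j) := by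
            rw [Finset.sum_filter]
            refine Finset.sum_congr rfl fun k _ => ?_
            simp only [hg, ite_not]
        _ ≤ κ₁ * (CE * Real.exp (-(a * L)) * (L + 1) ^ PE) := by
            rw [Finset.sum_congr rfl fun k _ => hfacE k, ← Finset.mul_sum]
            refine mul_le_mul_of_nonneg_left (htail L hL _ fun k hk => ?_) hκ₁.le
            exact not_le.1 (Finset.mem_filter.1 hk).2
        _ ≤ κ₁ * (CE * Real.exp (-(a * L)) * ((2 / a) ^ PE * t ^ PE)) := by
            gcongr
            exact hpow hPEnn
        _ = ε := by
            rw [hexpE, hQ, Real.rpow_neg htpos.le]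
            have : 0 < t ^ PE := by positivity
            have : 0 < (2 / a) ^ PE := by positivity
            field_simp
    have hgS : Summable g := summable_of_sum_le hgnn hgsum
    set r : (Fin d → ℕ) → Y := fun k => if ∑ j, w j * (k j : ℝ) ≤ L then 0 else mixDiff M k
      with hr
    have hrg (k) : ‖r k‖ ≤ g k := by
      simp only [hr, hg]
      split_ifs
      · simp
      · exact hM k
    have hrS : Summable r := Summable.of_norm_bounded hgS hrg
    have hrnorm : ‖∑' k, r k‖ ≤ ε :=
      (tsum_of_norm_bounded hgS.hasSum hrg).trans (hgS.tsum_le_of_sum_le hgsum)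
    have hsub := (hMinf.sub hrS.hasSum).tsum_eq
    have heq : (∑' k : Fin d → ℕ,
        if ∑ j, (β j + γ j) * (k j : ℝ) ≤ L then mixDiff M k else 0) = Minf - ∑' k, r k := by
      rw [← hsub]
      refine tsum_congr fun k => ?_
      simp only [hr, hw]
      split_ifs <;> simp
    rw [heq, sub_sub_cancel_left, norm_neg]
    exact hrnorm
  · rw [habs]
    refine Real.tsum_le_of_sum_le (fun k => ?_) fun S => ?_
    · split_ifs
      · exact Finset.prod_nonneg fun j _ => by have := hK2 j; positivity
      · exact le_rfl
    · rw [← Finset.sum_filter]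
      calc _ ≤ κ₂ * (CW * Real.exp (ρ * a * L) * (L + 1) ^ PW) := by
            rw [Finset.sum_congr rfl fun k _ => hfacW k, ← Finset.mul_sum]
            refine mul_le_mul_of_nonneg_left (hsimplex L hL _ fun k hk => ?_) hκ₂.le
            exact (Finset.mem_filter.1 hk).2
        _ ≤ κ₂ * (CW * Real.exp (ρ * a * L) * ((2 / a) ^ PW * t ^ PW)) := by
            gcongr
            exact hpow hPWnn
        _ = _ := by
            have hexp : ((J.card : ℝ) - 1) * (1 + ρ) + ρ * ∑ j ∈ J, β' j + ∑ j ∈ J, γ' j =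
                ρ * PE + PW := by rw [hPE, hPW]; ring
            rw [hexp, hexpW, hQ, Real.mul_rpow hκ₁.le (by positivity), Real.rpow_add htpos (ρ * PE) PW]
            ring
end
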